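/- arXiv:2601.02274 — 2 statements merged into one kernel-verified Lean document; each statement's English description precedes it below -/
import Mathlib

section
/- Let 0 < r₁ < r₂. There exist constants c > 0, d > 0, C₀ > 0 and h₀ > 0 such that for all h ∈ (0, h₀] and all u ∈ C_c^∞(A(0,r₁,r₂), ℂ), writing φ(x) := c·e^{‖x‖}, A u := e^{φ/h}(−h²Δ)(e^{−φ/h}u) and A* u := e^{−φ/h}(−h²Δ)(e^{φ/h}u), one has (1/h) · Re ∫_{ℝ²} (A*(A u) − A(A* u)) · conj(u) + d ∫_{ℝ²} |A u|² ≥ C₀ ∫_{ℝ²} (|u|² + |h∇u|²). -/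
open MeasureTheory Metric Set

noncomputable section

abbrev E2 := EuclideanSpace ℝ (Fin 2)

/-- The `i`-th standard basis vector of ℝ². -/
def basis2 (i : Fin 2) : E2 := EuclideanSpace.single i (1 : ℝ)

/-- Laplacian of a complex-valued function on ℝ². -/
def lapC (u : E2 → ℂ) (x : E2) : ℂ :=
  ∑ i, fderiv ℝ (fun y => fderiv ℝ u y (basis2 i)) x (basis2 i)

/-- Squared Euclidean norm of the gradient of a complex-valued function. -/
def gradSq (u : E2 → ℂ) (x : E2) : ℝ := ∑ i, ‖fderiv ℝ u x (basis2 i)‖ ^ 2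

/-- The conjugated free Laplacian `A u = e^{φ/h}(−h²Δ)(e^{−φ/h} u)`. -/
def opA (h : ℝ) (φ : E2 → ℝ) (u : E2 → ℂ) (x : E2) : ℂ :=
  (Real.exp (φ x / h) : ℂ) *
    (-(h ^ 2 : ℂ) * lapC (fun y => (Real.exp (-φ y / h) : ℂ) * u y) x)

/-- Its formal adjoint `A* u = e^{−φ/h}(−h²Δ)(e^{φ/h} u)`. -/
def opAstar (h : ℝ) (φ : E2 → ℝ) (u : E2 → ℂ) (x : E2) : ℂ :=
  (Real.exp (-φ x / h) : ℂ) *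
    (-(h ^ 2 : ℂ) * lapC (fun y => (Real.exp (φ y / h) : ℂ) * u y) x)


theorem alg1 {R : Type*} [CommRing R] [Algebra ℂ R] (D0 D1 : Derivation ℂ R R)
    (k : ℂ) (p u e e' : R) (he : e' * e = 1)
    (h0 : D0 e = -(algebraMap ℂ R k * D0 p * e)) (h1 : D1 e = -(algebraMap ℂ R k * D1 p * e)) :
    e' * (D0 (D0 (e * u)) + D1 (D1 (e * u))) =
      D0 (D0 u) + D1 (D1 u) - 2 * algebraMap ℂ R k * (D0 p * D0 u + D1 p * D1 u)
        - algebraMap ℂ R k * (D0 (D0 p) + D1 (D1 p)) * u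
        + algebraMap ℂ R k ^ 2 * (D0 p ^ 2 + D1 p ^ 2) * u := by
  simp only [Derivation.leibniz, map_add, map_neg, smul_eq_mul, h0, h1, Derivation.map_algebraMap]
  linear_combination (D0 (D0 u) + D1 (D1 u) - 2 * algebraMap ℂ R k * (D0 p * D0 u + D1 p * D1 u)
        - algebraMap ℂ R k * (D0 (D0 p) + D1 (D1 p)) * u
        + algebraMap ℂ R k ^ 2 * (D0 p ^ 2 + D1 p ^ 2) * u) * he

def Bop {R : Type*} [CommRing R] [Algebra ℂ R] (D0 D1 : Derivation ℂ R R)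
    (k : ℂ) (p u : R) : R :=
  D0 (D0 u) + D1 (D1 u) - 2 * algebraMap ℂ R k * (D0 p * D0 u + D1 p * D1 u)
        - algebraMap ℂ R k * (D0 (D0 p) + D1 (D1 p)) * u
        + algebraMap ℂ R k ^ 2 * (D0 p ^ 2 + D1 p ^ 2) * u

theorem alg2 {R : Type*} [CommRing R] [Algebra ℂ R] (D0 D1 : Derivation ℂ R R)
    (hc : ∀ f, D1 (D0 f) = D0 (D1 f)) (k : ℂ) (p u : R) :
    Bop D0 D1 (-k) p (Bop D0 D1 k p u) - Bop D0 D1 k p (Bop D0 D1 (-k) p u) =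
      algebraMap ℂ R k * (-8 * (D0 (D0 (D0 p) * D0 u + D0 (D1 p) * D1 u)
        + D1 (D0 (D1 p) * D0 u + D1 (D1 p) * D1 u)) 
        - 2 * (D0 (D0 (D0 (D0 p) + D1 (D1 p))) + D1 (D1 (D0 (D0 p) + D1 (D1 p)))) * u
        + 8 * algebraMap ℂ R k ^ 2 * (D0 p ^ 2 * D0 (D0 p) + 2 * D0 p * D1 p * D0 (D1 p)
            + D1 p ^ 2 * D1 (D1 p)) * u) := by
  have h2 : ∀ D : Derivation ℂ R R, D (2 : R) = 0 := fun D => by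
    simpa using D.map_natCast 2
  simp only [Bop, Derivation.leibniz, map_add, map_sub, map_neg, smul_eq_mul, hc, 
    Derivation.map_algebraMap, h2, pow_two, mul_zero, add_zero, map_zero]
  ring

def Sm : Subalgebra ℂ (E2 → ℂ) where
  carrier := {f | ContDiff ℝ (⊤ : ℕ∞) f}
  mul_mem' := fun {f g} (hf : ContDiff ℝ (⊤ : ℕ∞) f) (hg : ContDiff ℝ (⊤ : ℕ∞) g) => ContDiff.mul hf hg
  add_mem' := fun {f g} (hf : ContDiff ℝ (⊤ : ℕ∞) f) (hg : ContDiff ℝ (⊤ : ℕ∞) g) => ContDiff.add hf hg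
  algebraMap_mem' := fun r => by
    change ContDiff ℝ (⊤ : ℕ∞) (fun _ : E2 => r)
    exact contDiff_const

theorem Sm_cd (f : Sm) : ContDiff ℝ (⊤ : ℕ∞) (f : E2 → ℂ) := f.2

theorem Sm_df (f : Sm) : Differentiable ℝ (f : E2 → ℂ) := (Sm_cd f).differentiable (by simp)

theorem Sm_cdD (f : Sm) (v : E2) :
    ContDiff ℝ (⊤ : ℕ∞) (fun x => fderiv ℝ (f : E2 → ℂ) x v) :=
  ((Sm_cd f).fderiv_right (m := (⊤ : ℕ∞)) (by simp)).clm_apply contDiff_const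

def DL (v : E2) : Sm →ₗ[ℂ] Sm where
  toFun f := ⟨fun x => fderiv ℝ (f : E2 → ℂ) x v, (Sm_cdD f) v⟩
  map_add' f g := by
    ext x
    change fderiv ℝ ((f : E2 → ℂ) + (g : E2 → ℂ)) x v = _
    rw [fderiv_add ((Sm_df f) x) ((Sm_df g) x)]; rfl
  map_smul' c f := by
    ext x
    change fderiv ℝ (c • (f : E2 → ℂ)) x v = _
    rw [fderiv_const_smul ((Sm_df f) x)]; rfl

def DD (v : E2) : Derivation ℂ Sm Sm := Derivation.mk' (DL v) (by
  intro f g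
  ext x
  change fderiv ℝ ((f : E2 → ℂ) * (g : E2 → ℂ)) x v = 
    (f : E2 → ℂ) x * fderiv ℝ (g : E2 → ℂ) x v + (g : E2 → ℂ) x * fderiv ℝ (f : E2 → ℂ) x v
  rw [fderiv_mul ((Sm_df f) x) ((Sm_df g) x)]
  simp)

theorem DD_apply (v : E2) (f : Sm) (x : E2) :
    (DD v f : E2 → ℂ) x = fderiv ℝ (f : E2 → ℂ) x v := rfl

theorem DD_comm (v w : E2) (f : Sm) : DD v (DD w f) = DD w (DD v f) := by
  ext x
  have hd : Differentiable ℝ (fderiv ℝ (f : E2 → ℂ)) :=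
    ((Sm_cd f).fderiv_right (m := 1) (by norm_cast)).differentiable (by simp)
  have key : ∀ a b : E2, (DD a (DD b f) : E2 → ℂ) x = fderiv ℝ (fderiv ℝ (f : E2 → ℂ)) x a b := by
    intro a b
    change fderiv ℝ (fun y => fderiv ℝ (f : E2 → ℂ) y b) x a = _
    rw [fderiv_clm_apply (hd x) (by fun_prop)]
    simp
  rw [key, key]
  have := ((Sm_cd f).contDiffAt (x := x)).isSymmSndFDerivAt (by simp; exact (WithTop.coe_le_coe.2 le_top : ((2 : ℕ∞) : WithTop ℕ∞) ≤ ((⊤ : ℕ∞) : WithTop ℕ∞)))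
  exact this v w

theorem lapC_Sm (f : Sm) (x : E2) : lapC (f : E2 → ℂ) x =
    ((DD (basis2 0) (DD (basis2 0) f) + DD (basis2 1) (DD (basis2 1) f) : Sm) : E2 → ℂ) x := by
  simp only [lapC, Fin.sum_univ_two]; rfl

def toSm (f : E2 → ℂ) (hf : ContDiff ℝ (⊤ : ℕ∞) f) : Sm := ⟨f, hf⟩

def ofR (ψ : E2 → ℝ) (hf : ContDiff ℝ (⊤ : ℕ∞) ψ) : Sm :=
  ⟨fun x => (ψ x : ℂ), Complex.ofRealCLM.contDiff.comp hf⟩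

theorem DD_ofR (ψ : E2 → ℝ) (hf : ContDiff ℝ (⊤ : ℕ∞) ψ) (v x : E2) :
    (DD v (ofR ψ hf) : E2 → ℂ) x = ((fderiv ℝ ψ x v : ℝ) : ℂ) := by
  have := (Complex.ofRealCLM.hasFDerivAt.comp x (hf.differentiable (by simp) x).hasFDerivAt)
  rw [DD_apply]
  change fderiv ℝ (Complex.ofRealCLM ∘ ψ) x v = _
  rw [this.fderiv]; rfl

abbrev BB (k : ℂ) (p u : Sm) : Sm := Bop (DD (basis2 0)) (DD (basis2 1)) k p u

theorem conj_lap (k : ℝ) (ψ : E2 → ℝ) (hψ : ContDiff ℝ (⊤ : ℕ∞) ψ) (u : Sm) (x : E2) :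
    (Real.exp (k * ψ x) : ℂ) * lapC (fun y => (Real.exp (-(k * ψ y)) : ℂ) * (u : E2 → ℂ) y) x =
     (BB k (ofR ψ hψ) u : E2 → ℂ) x := by
  have h1 : ContDiff ℝ (⊤ : ℕ∞) (fun y => Real.exp (-(k * ψ y))) := by fun_prop
  have h2 : ContDiff ℝ (⊤ : ℕ∞) (fun y => Real.exp ((k * ψ y))) := by fun_prop
  have hD : ∀ v, DD v (ofR _ h1) = -(algebraMap ℂ Sm k * DD v (ofR ψ hψ) * ofR _ h1) := by
    intro v
    ext x
    have : HasFDerivAt (fun y => Real.exp (-(k * ψ y))) _ x :=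
      (((hψ.differentiable (by simp) x).hasFDerivAt.const_mul k).neg).exp
    change (DD v (ofR _ h1) : E2 → ℂ) x = -((k : ℂ) * (DD v (ofR ψ hψ) : E2 → ℂ) x * ((Real.exp (-(k * ψ x)) : ℝ) : ℂ))
    rw [DD_ofR, DD_ofR, this.fderiv]
    push_cast [smul_apply, neg_apply, smul_eq_mul, Pi.neg_apply]
    ring
  have := alg1 (DD (basis2 0)) (DD (basis2 1)) k (ofR ψ hψ) u (ofR _ h1) (ofR _ h2) (by
    ext x
    change ((Real.exp ((k * ψ x)) : ℝ) : ℂ) * ((Real.exp (-(k * ψ x)) : ℝ) : ℂ) = 1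
    rw [← Complex.ofReal_mul, ← Real.exp_add]; simp) (hD _) (hD _)
  rw [BB, Bop, ← this]
  have := lapC_Sm (ofR _ h1 * u) x
  change _ = ((Real.exp ((k * ψ x)) : ℝ) : ℂ) * _
  rw [← this]; rfl

theorem opA_eq (h : ℝ) (ψ : E2 → ℝ) (hψ : ContDiff ℝ (⊤ : ℕ∞) ψ) (u : Sm) :
    opA h ψ (u : E2 → ℂ) = ((-(h ^ 2 : ℂ)) • BB ((h⁻¹ : ℝ) : ℂ) (ofR ψ hψ) u : Sm) := by
  ext x
  change _ = (-(h ^ 2 : ℂ)) * (BB ((h⁻¹ : ℝ) : ℂ) (ofR ψ hψ) u : E2 → ℂ) x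
  rw [← conj_lap, opA]
  simp only [div_eq_inv_mul, mul_neg]
  ring

theorem opAstar_eq (h : ℝ) (ψ : E2 → ℝ) (hψ : ContDiff ℝ (⊤ : ℕ∞) ψ) (u : Sm) :
    opAstar h ψ (u : E2 → ℂ) = ((-(h ^ 2 : ℂ)) • BB (-((h⁻¹ : ℝ) : ℂ)) (ofR ψ hψ) u : Sm) := by
  ext x
  change _ = (-(h ^ 2 : ℂ)) * (BB (-((h⁻¹ : ℝ) : ℂ)) (ofR ψ hψ) u : E2 → ℂ) x
  rw [← Complex.ofReal_neg, ← conj_lap, opAstar]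
  simp only [div_eq_inv_mul, mul_neg, neg_mul, neg_neg]
  ring

theorem Bop_smul (k c : ℂ) (p u : Sm) : BB k p (c • u) = c • BB k p u := by
  have hs : ∀ v f, DD v (c • f) = c • DD v f := fun v f => (DD v).map_smul c f
  simp only [BB, Bop, hs]
  simp only [Algebra.smul_def c]
  ring

/-- the Laplacian squared of `p` -/
def lap2 (p : Sm) : Sm :=
  DD (basis2 0) (DD (basis2 0) (DD (basis2 0) (DD (basis2 0) p) + DD (basis2 1) (DD (basis2 1) p))) + 
  DD (basis2 1) (DD (basis2 1) (DD (basis2 0) (DD (basis2 0) p) + DD (basis2 1) (DD (basis2 1) p)))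

theorem comm_eq (h : ℝ) (ψ : E2 → ℝ) (hψ : ContDiff ℝ (⊤ : ℕ∞) ψ) (u : Sm) (p : Sm)
    (hp : p = ofR ψ hψ) (D0 D1 : Derivation ℂ Sm Sm) (hD0 : D0 = DD (basis2 0)) (hD1 : D1 = DD (basis2 1)) (x : E2) :
    opAstar h ψ (opA h ψ u) x - opA h ψ (opAstar h ψ u) x =
    (((h : ℂ) ^ 4) • (algebraMap ℂ Sm ((h⁻¹ : ℝ) : ℂ) * (-8 * (D0 (D0 (D0 p) * D0 u + D0 (D1 p) * D1 u)
        + D1 (D0 (D1 p) * D0 u + D1 (D1 p) * D1 u)) 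
        - 2 * lap2 p * u
        + 8 * algebraMap ℂ Sm ((h⁻¹ : ℝ) : ℂ) ^ 2 * (D0 p ^ 2 * D0 (D0 p) + 2 * D0 p * D1 p * D0 (D1 p)
            + D1 p ^ 2 * D1 (D1 p)) * u)) : Sm).1 x := by
  subst hD0 hD1 hp
  rw [opA_eq h ψ hψ u, opAstar_eq h ψ hψ u, opA_eq h ψ hψ, opAstar_eq h ψ hψ, Bop_smul, Bop_smul]
  have := alg2 (DD (basis2 0)) (DD (basis2 1)) (DD_comm _ _) ((h⁻¹ : ℝ) : ℂ) (ofR ψ hψ) u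
  rw [lap2, ← this, smul_smul, smul_smul]
  simp only [BB]
  have e : (-(h:ℂ)^2) * (-(h:ℂ)^2) = (h:ℂ)^4 := by ring
  rw [e, smul_sub]
  rfl

theorem hasFDerivAt_nrm (x : E2) (hx : x ≠ 0) :
    HasFDerivAt (fun y : E2 => ‖y‖) ((‖x‖)⁻¹ • innerSL ℝ x) x := by
  have h1 : HasFDerivAt (fun y : E2 => ‖y‖ ^ 2) (2 • innerSL ℝ x) x :=
    (hasStrictFDerivAt_norm_sq x).hasFDerivAt
  have h2 := h1.sqrt (by simpa using hx)
  simp only [Real.sqrt_sq (norm_nonneg _)] at h2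
  have e : (‖x‖)⁻¹ • innerSL ℝ x = (1 / (2 * ‖x‖)) • 2 • innerSL ℝ x := by
    rw [← Nat.cast_smul_eq_nsmul ℝ, smul_smul]
    congr 1
    have : ‖x‖ ≠ 0 := norm_ne_zero_iff.2 hx
    push_cast
    field_simp
  rw [e]
  exact h2

theorem inner_b (x : E2) (i : Fin 2) : inner ℝ x (basis2 i) = x i := by
  simp [basis2, PiLp.inner_apply]

theorem fderiv_wt (x : E2) (hx : x ≠ 0) (i : Fin 2) :
    fderiv ℝ (fun y : E2 => Real.exp ‖y‖) x (basis2 i) = Real.exp ‖x‖ * (x i * ‖x‖⁻¹) := by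
  rw [(hasFDerivAt_nrm x hx).exp.fderiv]
  simp only [smul_apply, innerSL_apply_apply, inner_b, smul_eq_mul]
  ring

theorem fderiv_wt2 (x : E2) (hx : x ≠ 0) (i j : Fin 2) :
    fderiv ℝ (fun y : E2 => Real.exp ‖y‖ * (y i * ‖y‖⁻¹)) x (basis2 j) =
      Real.exp ‖x‖ * (x i * x j * (‖x‖⁻¹) ^ 2 + (if i = j then 1 else 0) * ‖x‖⁻¹ - 
        x i * x j * (‖x‖⁻¹) ^ 3) := by
  have hn := hasFDerivAt_nrm x hx
  have hp : HasFDerivAt (fun y : E2 => y i) (EuclideanSpace.proj i : E2 →L[ℝ] ℝ) x :=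
    (EuclideanSpace.proj i : E2 →L[ℝ] ℝ).hasFDerivAt
  have hi := (hasDerivAt_inv (norm_ne_zero_iff.2 hx)).comp_hasFDerivAt x hn
  have := hn.exp.mul (hp.mul hi)
  change HasFDerivAt (fun y : E2 => Real.exp ‖y‖ * (y i * ‖y‖⁻¹)) _ x at this
  rw [this.fderiv]
  have e : (EuclideanSpace.proj i : E2 →L[ℝ] ℝ) (basis2 j) = if i = j then 1 else 0 := by
    simp [basis2]
  simp only [add_apply, smul_apply, innerSL_apply_apply, inner_b, smul_eq_mul, e, Function.comp, Pi.mul_apply]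
  have : ‖x‖ ≠ 0 := norm_ne_zero_iff.2 hx
  field_simp
  ring

theorem exists_wt (r₁ : ℝ) (hr₁ : 0 < r₁) : ∃ ψ : E2 → ℝ, ContDiff ℝ (⊤ : ℕ∞) ψ ∧
    ∀ x, r₁ < ‖x‖ → ψ =ᶠ[nhds x] (fun y => Real.exp ‖y‖) := by
  let b : ContDiffBump (0 : E2) := ⟨r₁ / 2, r₁, by linarith, by linarith⟩
  refine ⟨fun y => (1 - b y) * Real.exp ‖y‖, ?_, ?_⟩
  · rw [contDiff_iff_contDiffAt]
    intro x
    by_cases hx : x = 0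
    · subst hx
      have : (fun y => (1 - b y) * Real.exp ‖y‖) =ᶠ[nhds (0 : E2)] fun _ => (0 : ℝ) := by
        filter_upwards [b.eventuallyEq_one] with y hy
        simp [hy]
      exact contDiffAt_const.congr_of_eventuallyEq this
    · exact (contDiffAt_const.sub b.contDiff.contDiffAt).mul ((contDiffAt_norm ℝ hx).exp)
  · intro x hx
    have : {y : E2 | r₁ < ‖y‖} ∈ nhds x := (isOpen_lt continuous_const continuous_norm).mem_nhds hx
    filter_upwards [this] with y hy
    have : b y = 0 := b.zero_of_le_dist (by simpa using (le_of_lt hy))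
    simp [this]

theorem DD_wt (r₁ : ℝ) (hr₁ : 0 < r₁) (ψ : E2 → ℝ) (hψ : ContDiff ℝ (⊤ : ℕ∞) ψ) 
    (h : ∀ x, r₁ < ‖x‖ → ψ =ᶠ[nhds x] (fun y => Real.exp ‖y‖)) (x : E2) (hx : r₁ < ‖x‖) (i : Fin 2) :
    (DD (basis2 i) (ofR ψ hψ)).1 x = ((Real.exp ‖x‖ * (x i * ‖x‖⁻¹) : ℝ) : ℂ) := by
  have := DD_ofR ψ hψ (basis2 i) x
  rw [this, (h x hx).fderiv_eq, fderiv_wt x (by rintro rfl; simp at hx; linarith)]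

theorem DD_wt2 (r₁ : ℝ) (hr₁ : 0 < r₁) (ψ : E2 → ℝ) (hψ : ContDiff ℝ (⊤ : ℕ∞) ψ) 
    (h : ∀ x, r₁ < ‖x‖ → ψ =ᶠ[nhds x] (fun y => Real.exp ‖y‖)) (x : E2) (hx : r₁ < ‖x‖) (i j : Fin 2) :
    (DD (basis2 j) (DD (basis2 i) (ofR ψ hψ))).1 x = ((Real.exp ‖x‖ * (x i * x j * (‖x‖⁻¹) ^ 2 + (if i = j then 1 else 0) * ‖x‖⁻¹ - 
        x i * x j * (‖x‖⁻¹) ^ 3) : ℝ) : ℂ) := by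
  have hx0 : x ≠ 0 := by rintro rfl; simp at hx; linarith
  have e : (DD (basis2 i) (ofR ψ hψ)).1 =ᶠ[nhds x] 
      fun y => ((Real.exp ‖y‖ * (y i * ‖y‖⁻¹) : ℝ) : ℂ) := by
    have : {y : E2 | r₁ < ‖y‖} ∈ nhds x := (isOpen_lt continuous_const continuous_norm).mem_nhds hx
    filter_upwards [this] with y hy
    exact DD_wt r₁ hr₁ ψ hψ h y hy i
  have d : DifferentiableAt ℝ (fun y : E2 => Real.exp ‖y‖ * (y i * ‖y‖⁻¹)) x := by
    have hn := (hasFDerivAt_nrm x hx0).differentiableAt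
    have hp : DifferentiableAt ℝ (fun y : E2 => y i) x :=
      (EuclideanSpace.proj i : E2 →L[ℝ] ℝ).differentiableAt
    exact hn.exp.mul (hp.mul (hn.inv (norm_ne_zero_iff.2 hx0)))
  change fderiv ℝ (DD (basis2 i) (ofR ψ hψ)).1 x (basis2 j) = _
  rw [e.fderiv_eq]
  have := Complex.ofRealCLM.hasFDerivAt.comp x d.hasFDerivAt
  change fderiv ℝ (Complex.ofRealCLM ∘ (fun y : E2 => Real.exp ‖y‖ * (y i * ‖y‖⁻¹))) x _ = _
  rw [this.fderiv, ← fderiv_wt2 x hx0]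
  rfl

/-! ### locality -/

theorem lapC_congr {f g : E2 → ℂ} {x : E2} (h : f =ᶠ[nhds x] g) : lapC f x = lapC g x := by
  unfold lapC
  refine Finset.sum_congr rfl fun i _ => ?_
  have : (fun y => fderiv ℝ f y (basis2 i)) =ᶠ[nhds x] fun y => fderiv ℝ g y (basis2 i) := by
    filter_upwards [h.fderiv (𝕜 := ℝ)] with y hy
    rw [hy]
  rw [this.fderiv_eq]

theorem opAstar_neg (h : ℝ) (φ : E2 → ℝ) (u : E2 → ℂ) : opAstar h φ u = opA h (fun y => - φ y) u := by
  ext x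
  simp only [opAstar, opA, neg_neg]

theorem opA_zero (h : ℝ) (φ : E2 → ℝ) (u : E2 → ℂ) (x : E2) (hx : x ∉ tsupport u) :
    opA h φ u x = 0 := by
  have h0 : u =ᶠ[nhds x] 0 := notMem_tsupport_iff_eventuallyEq.1 hx
  have : (fun y => (Real.exp (-φ y / h) : ℂ) * u y) =ᶠ[nhds x] fun _ => 0 := by
    filter_upwards [h0] with y hy
    simp [hy]
  rw [opA, lapC_congr this]
  simp [lapC]

theorem opA_tsupport (h : ℝ) (φ : E2 → ℝ) (u : E2 → ℂ) : tsupport (opA h φ u) ⊆ tsupport u := by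
  refine closure_minimal ?_ (isClosed_tsupport u)
  intro x hx
  by_contra hc
  exact hx (opA_zero h φ u x hc)

theorem opA_congr (h : ℝ) (φ ψ : E2 → ℝ) (u : E2 → ℂ) (H : ∀ x ∈ tsupport u, φ =ᶠ[nhds x] ψ) :
    opA h φ u = opA h ψ u := by
  ext x
  by_cases hx : x ∈ tsupport u
  · have : (fun y => (Real.exp (-φ y / h) : ℂ) * u y) =ᶠ[nhds x]
        fun y => (Real.exp (-ψ y / h) : ℂ) * u y := by
      filter_upwards [H x hx] with y hy
      rw [hy]
    rw [opA, opA, lapC_congr this, (H x hx).eq_of_nhds]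
  · rw [opA_zero _ _ _ _ hx, opA_zero _ _ _ _ hx]

theorem opAstar_congr (h : ℝ) (φ ψ : E2 → ℝ) (u : E2 → ℂ) (H : ∀ x ∈ tsupport u, φ =ᶠ[nhds x] ψ) :
    opAstar h φ u = opAstar h ψ u := by
  rw [opAstar_neg, opAstar_neg]
  exact opA_congr _ _ _ _ fun x hx => (H x hx).neg

theorem opAstar_tsupport (h : ℝ) (φ : E2 → ℝ) (u : E2 → ℂ) :
    tsupport (opAstar h φ u) ⊆ tsupport u := by
  rw [opAstar_neg]; exact opA_tsupport _ _ _

/-! ### integration -/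

def cj (u : Sm) : Sm := ⟨fun x => (starRingEnd ℂ) (u.1 x), Complex.conjCLE.contDiff.comp (Sm_cd u)⟩

theorem DD_cj (v : E2) (u : Sm) : DD v (cj u) = cj (DD v u) := by
  ext x
  have := (Complex.conjCLE.toContinuousLinearMap.hasFDerivAt.comp x (Sm_df u x).hasFDerivAt)
  change fderiv ℝ (Complex.conjCLE.toContinuousLinearMap ∘ u.1) x v = _
  rw [this.fderiv]; rfl

theorem int_DD (v : E2) (f : Sm) (hf : HasCompactSupport f.1) : ∫ x, (DD v f).1 x = 0 := by
  have h1 : Integrable f.1 := (Sm_cd f).continuous.integrable_of_hasCompactSupport hf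
  have h2 : Integrable (fun x => fderiv ℝ f.1 x v) := 
    (Sm_cdD f v).continuous.integrable_of_hasCompactSupport (hf.fderiv_apply (𝕜 := ℝ) v)
  have := integral_mul_fderiv_eq_neg_fderiv_mul_of_integrable (μ := (volume : Measure E2)) (𝕜 := ℂ)
    (f := fun _ : E2 => (1 : ℂ)) (g := f.1) (v := v) (by simp) (by simpa using h2) 
    (by simpa using h1) (fun x _ => by fun_prop) (fun x _ => Sm_df f x)
  change ∫ x, fderiv ℝ f.1 x v = 0
  simpa using this

theorem real_ineq (x0 x1 r r₂ E a0 a1 : ℝ) (hr : 0 < r) (hr2 : r ≤ r₂) (hE : 1 ≤ E)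
    (hx : x0 ^ 2 + x1 ^ 2 = r ^ 2) :
    min 1 r₂⁻¹ * (a0 ^ 2 + a1 ^ 2) ≤ 
      E * (x0 * x0 * r⁻¹ ^ 2 + 1 * r⁻¹ - x0 * x0 * r⁻¹ ^ 3) * a0 ^ 2 +
      2 * (E * (x1 * x0 * r⁻¹ ^ 2 + 0 * r⁻¹ - x1 * x0 * r⁻¹ ^ 3)) * (a0 * a1) +
      E * (x1 * x1 * r⁻¹ ^ 2 + 1 * r⁻¹ - x1 * x1 * r⁻¹ ^ 3) * a1 ^ 2 := by
  set m := min 1 r₂⁻¹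
  have hm1 : m ≤ 1 := min_le_left _ _
  have hm2 : m ≤ r⁻¹ := (min_le_right _ _).trans (inv_anti₀ hr hr2)
  have hm0 : 0 ≤ m := le_min zero_le_one (inv_nonneg.2 (hr.le.trans hr2))
  have key : E * (x0 * x0 * r⁻¹ ^ 2 + 1 * r⁻¹ - x0 * x0 * r⁻¹ ^ 3) * a0 ^ 2 +
      2 * (E * (x1 * x0 * r⁻¹ ^ 2 + 0 * r⁻¹ - x1 * x0 * r⁻¹ ^ 3)) * (a0 * a1) +
      E * (x1 * x1 * r⁻¹ ^ 2 + 1 * r⁻¹ - x1 * x1 * r⁻¹ ^ 3) * a1 ^ 2 = 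
      E * (1 * ((x0 * a0 + x1 * a1) * r⁻¹) ^ 2 + r⁻¹ * ((x0 * a1 - x1 * a0) * r⁻¹) ^ 2) := by
    field_simp
    linear_combination (-a0 ^ 2 - a1 ^ 2) * hx
  have k2 : a0 ^ 2 + a1 ^ 2 = ((x0 * a0 + x1 * a1) * r⁻¹) ^ 2 + ((x0 * a1 - x1 * a0) * r⁻¹) ^ 2 := by
    field_simp
    linear_combination (-a0 ^ 2 - a1 ^ 2) * hx
  rw [key, k2]
  set s := ((x0 * a0 + x1 * a1) * r⁻¹) ^ 2
  set t := ((x0 * a1 - x1 * a0) * r⁻¹) ^ 2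
  have hs : 0 ≤ s := sq_nonneg _
  have ht : 0 ≤ t := sq_nonneg _
  have hri : 0 ≤ r⁻¹ := by positivity
  calc m * (s + t) = m * s + m * t := by ring
    _ ≤ 1 * s + r⁻¹ * t := by gcongr
    _ ≤ E * (1 * s + r⁻¹ * t) := le_mul_of_one_le_left (by positivity) hE

theorem real_eq (x0 x1 r E : ℝ) (hr : 0 < r) (hx : x0 ^ 2 + x1 ^ 2 = r ^ 2) :
    (E * (x0 * r⁻¹)) ^ 2 * (E * (x0 * x0 * r⁻¹ ^ 2 + 1 * r⁻¹ - x0 * x0 * r⁻¹ ^ 3)) +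
    2 * (E * (x0 * r⁻¹)) * (E * (x1 * r⁻¹)) * (E * (x1 * x0 * r⁻¹ ^ 2 + 0 * r⁻¹ - x1 * x0 * r⁻¹ ^ 3)) +
    (E * (x1 * r⁻¹)) ^ 2 * (E * (x1 * x1 * r⁻¹ ^ 2 + 1 * r⁻¹ - x1 * x1 * r⁻¹ ^ 3)) = E ^ 3 := by
  obtain rfl | hE := eq_or_ne E 0
  · simp
  field_simp
  have h1 : x1 ^ 2 = r ^ 2 - x0 ^ 2 := by linarith
  have h2 : x1 ^ 4 = (r ^ 2 - x0 ^ 2) ^ 2 := by rw [← h1]; ring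
  ring_nf
  simp only [h1, h2]
  ring

theorem int_comm (h : ℝ) (ψ : E2 → ℝ) (hψ : ContDiff ℝ (⊤ : ℕ∞) ψ) (u : Sm) 
    (hu : HasCompactSupport u.1) (p : Sm) (hp : p = ofR ψ hψ)
    (D0 D1 : Derivation ℂ Sm Sm) (hD0 : D0 = DD (basis2 0)) (hD1 : D1 = DD (basis2 1)) :
    ∫ x, (opAstar h ψ (opA h ψ u) x - opA h ψ (opAstar h ψ u) x) * (starRingEnd ℂ) (u.1 x) =
    ∫ x, (algebraMap ℂ Sm ((h : ℂ) ^ 4 * ((h⁻¹ : ℝ) : ℂ)) * 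
      (8 * ((D0 (D0 p) * D0 u + D0 (D1 p) * D1 u) * cj (D0 u)
        + (D0 (D1 p) * D0 u + D1 (D1 p) * D1 u) * cj (D1 u)) 
        - 2 * lap2 p * u * cj u
        + 8 * algebraMap ℂ Sm ((h⁻¹ : ℝ) : ℂ) ^ 2 * (D0 p ^ 2 * D0 (D0 p) + 2 * D0 p * D1 p * D0 (D1 p)
            + D1 p ^ 2 * D1 (D1 p)) * u * cj u) : Sm).1 x := by
  have hcu : HasCompactSupport (cj u).1 := hu.comp_left (map_zero _)
  set W0 := D0 (D0 p) * D0 u + D0 (D1 p) * D1 u with hW0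
  set W1 := D0 (D1 p) * D0 u + D1 (D1 p) * D1 u with hW1
  set c := (h : ℂ) ^ 4 * ((h⁻¹ : ℝ) : ℂ) with hc
  set H : Sm := algebraMap ℂ Sm c * 
      (8 * (W0 * cj (D0 u) + W1 * cj (D1 u)) - 2 * lap2 p * u * cj u
        + 8 * algebraMap ℂ Sm ((h⁻¹ : ℝ) : ℂ) ^ 2 * (D0 p ^ 2 * D0 (D0 p) + 2 * D0 p * D1 p * D0 (D1 p)
            + D1 p ^ 2 * D1 (D1 p)) * u * cj u) with hH
  have c0 : HasCompactSupport (W0 * cj u).1 := hcu.mul_left (f := W0.1)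
  have c1 : HasCompactSupport (W1 * cj u).1 := hcu.mul_left (f := W1.1)
  have hcD : ∀ v, HasCompactSupport (cj (DD v u)).1 := fun v =>
    (hu.fderiv_apply (𝕜 := ℝ) v).comp_left (g := starRingEnd ℂ) (map_zero _)
  have i0 := int_DD (basis2 0) _ c0
  have i1 := int_DD (basis2 1) _ c1
  have e : ∀ x, (opAstar h ψ (opA h ψ u) x - opA h ψ (opAstar h ψ u) x) * (starRingEnd ℂ) (u.1 x)
      = H.1 x + (-8 * c) * ((DD (basis2 0) (W0 * cj u)).1 x + (DD (basis2 1) (W1 * cj u)).1 x) := by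
    intro x
    rw [comm_eq h ψ hψ u p hp D0 D1 hD0 hD1]
    have key : (((h : ℂ) ^ 4) • (algebraMap ℂ Sm ((h⁻¹ : ℝ) : ℂ) * (-8 * (D0 W0
        + D1 W1) 
        - 2 * lap2 p * u
        + 8 * algebraMap ℂ Sm ((h⁻¹ : ℝ) : ℂ) ^ 2 * (D0 p ^ 2 * D0 (D0 p) + 2 * D0 p * D1 p * D0 (D1 p)
            + D1 p ^ 2 * D1 (D1 p)) * u)) : Sm) * cj u = H + 
        (-8 * algebraMap ℂ Sm c) * (D0 (W0 * cj u) + D1 (W1 * cj u)) := by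
      have d0 : D0 (cj u) = cj (D0 u) := by rw [hD0]; exact DD_cj _ _
      have d1 : D1 (cj u) = cj (D1 u) := by rw [hD1]; exact DD_cj _ _
      rw [Derivation.leibniz, Derivation.leibniz, d0, d1, hH, hc, map_mul, Algebra.smul_def]
      simp only [smul_eq_mul]
      ring
    have := congrArg (fun f : Sm => f.1 x) key
    rw [← hD0, ← hD1]
    exact this
  simp only [e]
  have I : ∀ v (f : Sm), HasCompactSupport f.1 → Integrable (fun x => (DD v f).1 x) := fun v f hf =>
    (Sm_cdD f v).continuous.integrable_of_hasCompactSupport (hf.fderiv_apply (𝕜 := ℝ) v)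
  have IH : Integrable (fun x => H.1 x) := by
    refine (Sm_cd H).continuous.integrable_of_hasCompactSupport ?_
    have : H = (algebraMap ℂ Sm c * 8 * W0) * cj (D0 u) + (algebraMap ℂ Sm c * 8 * W1) * cj (D1 u) + 
      (algebraMap ℂ Sm c * (- 2 * lap2 p * u
        + 8 * algebraMap ℂ Sm ((h⁻¹ : ℝ) : ℂ) ^ 2 * (D0 p ^ 2 * D0 (D0 p) + 2 * D0 p * D1 p * D0 (D1 p)
            + D1 p ^ 2 * D1 (D1 p)) * u)) * cj u := by rw [hH]; ring
    rw [this, hD0, hD1]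
    exact (((hcD _).mul_left).add ((hcD _).mul_left)).add (hcu.mul_left)
  have IS : Integrable (fun x => (-8 * c) * ((DD (basis2 0) (W0 * cj u)).1 x + (DD (basis2 1) (W1 * cj u)).1 x)) :=
    ((I _ _ c0).add (I _ _ c1)).const_mul _
  rw [integral_add IH IS, integral_const_mul, 
    integral_add (I _ _ c0) (I _ _ c1), i0, i1]
  simp

theorem pointwise (h k : ℝ) (hh : 0 < h) (hk : k = h⁻¹) (m M : ℝ) (hm : 0 < m) (hm1 : m ≤ 1) 
   (hM : h ^ 2 * M ≤ 1) 
   (u u0 u1 l : ℂ) (p0 p1 a b c E : ℝ) (hl : ‖l‖ ≤ M) (hE : 1 ≤ E)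
   (hess : ∀ s t : ℝ, m * (s ^ 2 + t ^ 2) ≤ a * s ^ 2 + 2 * b * (s * t) + c * t ^ 2)
   (hQ : p0 ^ 2 * a + 2 * p0 * p1 * b + p1 ^ 2 * c = E ^ 3) :
   m * (‖u‖ ^ 2 + h ^ 2 * (‖u0‖ ^ 2 + ‖u1‖ ^ 2)) ≤ h⁻¹ * (((h : ℂ) ^ 4 * (k : ℂ)) * 
      (8 * (((a : ℂ) * u0 + (b : ℂ) * u1) * (starRingEnd ℂ) u0 + ((b : ℂ) * u0 + (c : ℂ) * u1) * (starRingEnd ℂ) u1) 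
        - 2 * l * u * (starRingEnd ℂ) u
        + 8 * (k : ℂ) ^ 2 * ((p0 : ℂ) ^ 2 * (a : ℂ) + 2 * (p0 : ℂ) * (p1 : ℂ) * (b : ℂ)
            + (p1 : ℂ) ^ 2 * (c : ℂ)) * u * (starRingEnd ℂ) u)).re := by
  have e1 : ((h : ℂ) ^ 4 * (k : ℂ)) = ((h ^ 3 : ℝ) : ℂ) := by
    rw [hk]; push_cast
    have : (h : ℂ) ≠ 0 := by exact_mod_cast hh.ne'
    field_simp
  have e2 : ((p0 : ℂ) ^ 2 * (a : ℂ) + 2 * (p0 : ℂ) * (p1 : ℂ) * (b : ℂ)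
            + (p1 : ℂ) ^ 2 * (c : ℂ)) = ((E ^ 3 : ℝ) : ℂ) := by rw [← hQ]; push_cast; ring
  have e3 : 8 * (k : ℂ) ^ 2 * ((E ^ 3 : ℝ) : ℂ) * u * (starRingEnd ℂ) u = 
      ((8 * k ^ 2 * E ^ 3 * ‖u‖ ^ 2 : ℝ) : ℂ) := by
    rw [mul_assoc, Complex.mul_conj, Complex.normSq_eq_norm_sq]; push_cast; ring
  have e4 : 2 * l * u * (starRingEnd ℂ) u = ((2 * ‖u‖ ^ 2 : ℝ) : ℂ) * l := by
    rw [mul_assoc, Complex.mul_conj, Complex.normSq_eq_norm_sq]; push_cast; ring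
  rw [e1, e2, e3, e4, Complex.re_ofReal_mul, Complex.add_re, Complex.sub_re, Complex.re_ofReal_mul, 
    Complex.ofReal_re]
  have e5 : (8 * (((a : ℂ) * u0 + (b : ℂ) * u1) * (starRingEnd ℂ) u0 + ((b : ℂ) * u0 + (c : ℂ) * u1) * (starRingEnd ℂ) u1)).re = 8 * ((a * u0.re ^ 2 + 2 * b * (u0.re * u1.re) + c * u1.re ^ 2) + (a * u0.im ^ 2 + 2 * b * (u0.im * u1.im) + c * u1.im ^ 2)) := by
    simp [Complex.mul_re, Complex.mul_im]
    ring
  rw [e5]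
  have n0 : ‖u0‖ ^ 2 = u0.re ^ 2 + u0.im ^ 2 := by
    rw [← Complex.normSq_eq_norm_sq, Complex.normSq_apply]; ring
  have n1 : ‖u1‖ ^ 2 = u1.re ^ 2 + u1.im ^ 2 := by
    rw [← Complex.normSq_eq_norm_sq, Complex.normSq_apply]; ring
  have hr := hess u0.re u1.re
  have hi := hess u0.im u1.im
  set q := (a * u0.re ^ 2 + 2 * b * (u0.re * u1.re) + c * u1.re ^ 2) + (a * u0.im ^ 2 + 2 * b * (u0.im * u1.im) + c * u1.im ^ 2)
  have hq : m * (‖u0‖ ^ 2 + ‖u1‖ ^ 2) ≤ q := by rw [n0, n1]; linarith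
  have hlr : l.re ≤ M := (Complex.re_le_norm l).trans hl
  have hq0 : 0 ≤ m * (‖u0‖ ^ 2 + ‖u1‖ ^ 2) := by positivity
  have e6 : h⁻¹ * (h ^ 3 * (8 * q - 2 * ‖u‖ ^ 2 * l.re + 8 * k ^ 2 * E ^ 3 * ‖u‖ ^ 2)) = 
    h ^ 2 * (8 * q) - 2 * (h ^ 2 * l.re) * ‖u‖ ^ 2 + 8 * E ^ 3 * ‖u‖ ^ 2 := by
    rw [hk]; field_simp
  rw [e6]
  have hE3 : 1 ≤ E ^ 3 := one_le_pow₀ hE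
  have hl2 : h ^ 2 * l.re ≤ 1 := (mul_le_mul_of_nonneg_left hlr (by positivity)).trans hM
  have f1 : h ^ 2 * (m * (‖u0‖ ^ 2 + ‖u1‖ ^ 2)) ≤ h ^ 2 * (8 * q) := 
    mul_le_mul_of_nonneg_left (by linarith) (by positivity)
  have f2 : (h ^ 2 * l.re) * ‖u‖ ^ 2 ≤ 1 * ‖u‖ ^ 2 := mul_le_mul_of_nonneg_right hl2 (by positivity)
  have f3 : 1 * ‖u‖ ^ 2 ≤ E ^ 3 * ‖u‖ ^ 2 := mul_le_mul_of_nonneg_right hE3 (by positivity)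
  have f4 : m * ‖u‖ ^ 2 ≤ 1 * ‖u‖ ^ 2 := mul_le_mul_of_nonneg_right hm1 (by positivity)
  have f5 : 0 ≤ ‖u‖ ^ 2 := by positivity
  linarith

theorem stmt7 (r₁ r₂ : ℝ) (hr₁ : 0 < r₁) (hr₁₂ : r₁ < r₂) :
    ∃ c > (0 : ℝ), ∃ d > (0 : ℝ), ∃ C₀ > (0 : ℝ), ∃ h₀ > (0 : ℝ),
      ∀ h : ℝ, 0 < h → h ≤ h₀ →
        ∀ u : E2 → ℂ, ContDiff ℝ (⊤ : ℕ∞) u → HasCompactSupport u →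
          tsupport u ⊆ ball (0 : E2) r₂ \ closedBall (0 : E2) r₁ →
          (1 / h) * (∫ x : E2,
                (opAstar h (fun y => c * Real.exp ‖y‖) (opA h (fun y => c * Real.exp ‖y‖) u) x -
                    opA h (fun y => c * Real.exp ‖y‖) (opAstar h (fun y => c * Real.exp ‖y‖) u) x) *
                  (starRingEnd ℂ) (u x)).re +
              d * ∫ x : E2, ‖opA h (fun y => c * Real.exp ‖y‖) u x‖ ^ 2 ≥
            C₀ * ∫ x : E2, (‖u x‖ ^ 2 + h ^ 2 * gradSq u x) := by
  obtain ⟨ψ, hψ, hψe⟩ := exists_wt r₁ hr₁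
  obtain ⟨M, hM⟩ := (isCompact_closedBall (0 : E2) r₂).exists_bound_of_continuousOn
    (Sm_cd (lap2 (ofR ψ hψ))).continuous.continuousOn
  have hr₂ : 0 < r₂ := hr₁.trans hr₁₂
  have hM0 : 0 ≤ M := (norm_nonneg _).trans (hM 0 (by simp [hr₂.le]))
  have hm : 0 < min 1 r₂⁻¹ := lt_min one_pos (inv_pos.2 hr₂)
  refine ⟨1, one_pos, 1, one_pos, min 1 r₂⁻¹, hm, (M + 1)⁻¹, by positivity, ?_⟩
  intro h hh hh0 u hu hcs hsupp
  simp only [one_mul]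
  have hsup : ∀ x ∈ tsupport u, r₁ < ‖x‖ ∧ ‖x‖ ≤ r₂ := by
    intro x hx
    have := hsupp hx
    simp only [mem_sdiff, mem_ball, mem_closedBall, dist_zero_right, not_le] at this
    exact ⟨this.2, this.1.le⟩
  have hc : ∀ x ∈ tsupport u, (fun y => Real.exp ‖y‖) =ᶠ[nhds x] ψ := fun x hx =>
    (hψe x (hsup x hx).1).symm
  rw [opA_congr h _ ψ u hc, opAstar_congr h _ ψ u hc, 
    opAstar_congr h _ ψ (opA h ψ u) (fun x hx => hc x (opA_tsupport _ _ _ hx)),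
    opA_congr h _ ψ (opAstar h ψ u) (fun x hx => hc x (opAstar_tsupport _ _ _ hx))]
  have hnn : 0 ≤ ∫ x : E2, ‖opA h ψ u x‖ ^ 2 := integral_nonneg fun x => by positivity
  suffices hS : min 1 r₂⁻¹ * ∫ x : E2, (‖u x‖ ^ 2 + h ^ 2 * gradSq u x) ≤ 
      (1 / h) * (∫ x : E2, (opAstar h ψ (opA h ψ u) x - opA h ψ (opAstar h ψ u) x) * (starRingEnd ℂ) (u x)).re by
    linarith
  have hMh : h ^ 2 * M ≤ 1 := by
    have h1 : h * (M + 1) ≤ 1 := by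
      calc h * (M + 1) ≤ (M + 1)⁻¹ * (M + 1) := by gcongr
        _ = 1 := inv_mul_cancel₀ (by positivity)
    have h2 : h ≤ 1 := by nlinarith
    nlinarith
  let U : Sm := ⟨u, hu⟩
  have hI := int_comm h ψ hψ U hcs _ rfl _ _ rfl rfl
  change ∫ x : E2, (opAstar h ψ (opA h ψ u) x - opA h ψ (opAstar h ψ u) x) * (starRingEnd ℂ) (u x) = _ at hI
  have hu0 : ∀ x, x ∉ tsupport u → u x = 0 := fun x hx => image_eq_zero_of_notMem_tsupport hx
  have hDu0 : ∀ v x, x ∉ tsupport u → fderiv ℝ u x v = 0 := fun v x hx => 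
    image_eq_zero_of_notMem_tsupport (f := fun y => fderiv ℝ u y v) (fun hx' => hx (tsupport_fderiv_apply_subset ℝ v hx'))
  obtain ⟨F, hFx, hF⟩ : ∃ F : Sm, (∀ x, F.1 x = ((h : ℂ) ^ 4 * ((h⁻¹ : ℝ) : ℂ)) * 
      (8 * (((DD (basis2 0) (DD (basis2 0) (ofR ψ hψ))).1 x * fderiv ℝ u x (basis2 0) + (DD (basis2 0) (DD (basis2 1) (ofR ψ hψ))).1 x * fderiv ℝ u x (basis2 1)) * (starRingEnd ℂ) (fderiv ℝ u x (basis2 0)) + ((DD (basis2 0) (DD (basis2 1) (ofR ψ hψ))).1 x * fderiv ℝ u x (basis2 0) + (DD (basis2 1) (DD (basis2 1) (ofR ψ hψ))).1 x * fderiv ℝ u x (basis2 1)) * (starRingEnd ℂ) (fderiv ℝ u x (basis2 1))) 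
        - 2 * (lap2 (ofR ψ hψ)).1 x * u x * (starRingEnd ℂ) (u x)
        + 8 * ((h⁻¹ : ℝ) : ℂ) ^ 2 * ((DD (basis2 0) (ofR ψ hψ)).1 x ^ 2 * (DD (basis2 0) (DD (basis2 0) (ofR ψ hψ))).1 x + 2 * (DD (basis2 0) (ofR ψ hψ)).1 x * (DD (basis2 1) (ofR ψ hψ)).1 x * (DD (basis2 0) (DD (basis2 1) (ofR ψ hψ))).1 x
            + (DD (basis2 1) (ofR ψ hψ)).1 x ^ 2 * (DD (basis2 1) (DD (basis2 1) (ofR ψ hψ))).1 x) * u x * (starRingEnd ℂ) (u x))) ∧ ∫ x : E2, (opAstar h ψ (opA h ψ u) x - opA h ψ (opAstar h ψ u) x) * (starRingEnd ℂ) (u x) = ∫ x, F.1 x :=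
    ⟨_, fun x => rfl, hI⟩
  rw [hF]
  have hFs : HasCompactSupport F.1 := by
    refine HasCompactSupport.intro hcs fun x hx => ?_
    rw [hFx, hu0 x hx, hDu0 _ x hx, hDu0 _ x hx]
    simp
  have hFi : Integrable F.1 := (Sm_cd F).continuous.integrable_of_hasCompactSupport hFs
  have hre : (∫ x, F.1 x).re = ∫ x, (F.1 x).re := (integral_re hFi).symm
  rw [hre, ← integral_const_mul, ← integral_const_mul, one_div]
  refine integral_mono ?_ (hFi.re.const_mul _) ?_
  · have hcont : Continuous fun x => min 1 r₂⁻¹ * (‖u x‖ ^ 2 + h ^ 2 * gradSq u x) := by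
      have h0 := (Sm_cdD U (basis2 0)).continuous
      have h1 := (Sm_cdD U (basis2 1)).continuous
      have h2 := hu.continuous
      simp only [gradSq, Fin.sum_univ_two]
      exact continuous_const.mul ((h2.norm.pow 2).add (continuous_const.mul ((h0.norm.pow 2).add (h1.norm.pow 2))))
    refine hcont.integrable_of_hasCompactSupport (HasCompactSupport.intro hcs fun x hx => ?_)
    simp [hu0 x hx, gradSq, hDu0 _ x hx]
  · intro x
    by_cases hx : x ∈ tsupport u
    · obtain ⟨hx1, hx2⟩ := hsup x hx
      have hr0 : 0 < ‖x‖ := hr₁.trans hx1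
      have hE : 1 ≤ Real.exp ‖x‖ := Real.one_le_exp hr0.le
      have hxx : x 0 ^ 2 + x 1 ^ 2 = ‖x‖ ^ 2 := by
        rw [EuclideanSpace.norm_sq_eq]; simp
      have d := DD_wt r₁ hr₁ ψ hψ hψe x hx1
      have dd := DD_wt2 r₁ hr₁ ψ hψ hψe x hx1
      have := pointwise h h⁻¹ hh rfl (min 1 r₂⁻¹) M hm (min_le_left _ _) hMh (u x)
        (fderiv ℝ u x (basis2 0)) (fderiv ℝ u x (basis2 1)) ((lap2 (ofR ψ hψ)).1 x)
        _ _ _ _ _ _ (hM x (by simpa using hx2)) hE 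
        (fun s t => real_ineq (x 0) (x 1) ‖x‖ r₂ _ s t hr0 hx2 hE hxx)
        (real_eq (x 0) (x 1) ‖x‖ _ hr0 hxx)
      simp only [gradSq, Fin.sum_univ_two]
      refine this.trans (le_of_eq ?_)
      rw [hFx, d, d, dd, dd, dd]
      simp
    · simp only [hFx, hu0 x hx, hDu0 _ x hx, gradSq]
      simp
end
end

section
/- Let R₀ > 0, let E₀ > 0, and let V : ℝ² → ℝ be bounded and measurable with ω_V(θ) > 0 for every θ ∈ (0,1]. There exist a positive function 𝜙 ∈ C^∞(ℝ², ℝ), and constants h₀ > 0, θ₀ ∈ (0,1] and C > 0, such that for all h ∈ (0,h₀], θ ∈ (0,θ₀], E ∈ [−E₀,E₀] and u ∈ C_c^∞(B(0,R₀), ℂ): h ∫_{B(0,R₀)} e^{2𝜙(x) ω_V(θ)^{1/2}/(h θ^{1/2})} (|u(x)|² + (θ/ω_V(θ)) |h∇u(x)|²) dx ≤ C (θ/ω_V(θ))^{3/2} ∫_{B(0,R₀)} e^{2𝜙(x) ω_V(θ)^{1/2}/(h θ^{1/2})} |(−h²Δ + Ṽ_θ − E)u(x)|² dx. -/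
open MeasureTheory Metric Set

noncomputable section

/-- The modulus of continuity of `V` over the ball `B(0,R₀)`. -/
def omegaV (R₀ : ℝ) (V : E2 → ℝ) (θ : ℝ) : ℝ :=
  sSup {a : ℝ | ∃ x₀ ∈ ball (0 : E2) R₀, ∃ t ∈ closedBall (0 : E2) θ,
    a = |V (x₀ - t) - V x₀|}

/-- The regularized potential `Ṽ_θ(x) = θ⁻² ∫ V(x - t) φ(t/θ) dt`. -/
def Vreg (V φ : E2 → ℝ) (θ : ℝ) (x : E2) : ℝ :=
  (1 / θ ^ 2) * ∫ t : E2, V (x - t) * φ (θ⁻¹ • t)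

/-- The semiclassical Schrödinger operator `(−h²Δ + W − E)u`. -/
def schrod (h : ℝ) (W : E2 → ℝ) (Eev : ℝ) (u : E2 → ℂ) (x : E2) : ℂ :=
  -(h ^ 2 : ℂ) * lapC u x + ((W x - Eev : ℝ) : ℂ) * u x


def PD (i : Fin 2) (f f' : E2 → ℝ) : Prop := ∀ x, HasLineDerivAt ℝ f (f' x) x (basis2 i)

lemma PD.congr {i : Fin 2} {f g f' g' : E2 → ℝ} (h : PD i f f') (h1 : ∀ x, g x = f x)
    (h2 : ∀ x, g' x = f' x) : PD i g g' := by
  obtain rfl : g = f := funext h1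
  obtain rfl : g' = f' := funext h2
  exact h

lemma PD.add {i : Fin 2} {f g f' g' : E2 → ℝ} (hf : PD i f f') (hg : PD i g g') :
    PD i (fun x => f x + g x) (fun x => f' x + g' x) := fun x => by
  have := HasDerivAt.add (hf x) (hg x)
  exact this

lemma PD.mul {i : Fin 2} {f g f' g' : E2 → ℝ} (hf : PD i f f') (hg : PD i g g') :
    PD i (fun x => f x * g x) (fun x => f' x * g x + f x * g' x) := fun x => by
  have := HasDerivAt.mul (hf x) (hg x)
  simp only [zero_smul, add_zero] at this
  exact this

lemma PD.cmul {i : Fin 2} {f f' : E2 → ℝ} (hf : PD i f f') (c : ℝ) :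
    PD i (fun x => c * f x) (fun x => c * f' x) := fun x => by
  have := HasDerivAt.const_mul c (hf x)
  exact this

lemma PD.exp {i : Fin 2} {f f' : E2 → ℝ} (hf : PD i f f') :
    PD i (fun x => Real.exp (f x)) (fun x => Real.exp (f x) * f' x) := fun x => by
  have := HasDerivAt.exp (hf x)
  rw [zero_smul, add_zero] at this
  exact this

lemma PD.const (i : Fin 2) (c : ℝ) : PD i (fun _ => c) (fun _ => 0) := fun x => by
  have := hasDerivAt_const (0:ℝ) c
  exact this

lemma PD.coord (i j : Fin 2) (a : ℝ) : PD i (fun x => x j - a) (fun _ => if j = i then 1 else 0) :=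
  fun x => by
  have : HasDerivAt (fun t : ℝ => (x j + t * (if j = i then (1:ℝ) else 0)) - a)
      (if j = i then 1 else 0) 0 := by
    have := (((hasDerivAt_id (0:ℝ)).mul_const (if j = i then (1:ℝ) else 0)).const_add (x j)).sub_const a
    simpa using this
  unfold HasLineDerivAt
  refine this.congr_of_eventuallyEq (Filter.Eventually.of_forall fun t => ?_)
  simp [basis2, PiLp.single_apply]

lemma PD.of_diff {f : E2 → ℝ} (hf : Differentiable ℝ f) (i : Fin 2) :
    PD i f (fun x => fderiv ℝ f x (basis2 i)) :=
  fun x => (hf x).hasFDerivAt.hasLineDerivAt _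

lemma PD.integral_zero {i : Fin 2} {f f' : E2 → ℝ} (hf : PD i f f') (h : Integrable f)
    (h' : Integrable f') : ∫ x, f' x = 0 := by
  have := integral_bilinear_hasLineDerivAt_right_eq_neg_left_of_integrable (μ := (volume : Measure E2))
    (f := fun _ : E2 => (1:ℝ)) (f' := fun _ => (0:ℝ)) (g := f) (g' := f') (v := basis2 i)
    (B := ContinuousLinearMap.mul ℝ ℝ)
    (by simp) (by simpa using h') (by simpa using h) (fun x _ => PD.const i 1 x) (fun x _ => hf x)
  simpa using this

set_option maxHeartbeats 1000000 in
lemma key (R₀ a s ε : ℝ) (hs : 1 ≤ s) (hε : 0 < ε) (u u0 u1 u00 u01 u11 W W0 W1 : E2 → ℝ)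
    (S : Set E2) (hS : IsCompact S) (hSB : S ⊆ ball 0 R₀)
    (z : ∀ x ∉ S, u x = 0) (z0 : ∀ x ∉ S, u0 x = 0) (z1 : ∀ x ∉ S, u1 x = 0)
    (z00 : ∀ x ∉ S, u00 x = 0) (z01 : ∀ x ∉ S, u01 x = 0) (z11 : ∀ x ∉ S, u11 x = 0)
    (c : Continuous u) (c0 : Continuous u0) (c1 : Continuous u1) (c00 : Continuous u00)
    (c01 : Continuous u01) (c11 : Continuous u11)
    (cW : Continuous W) (cW0 : Continuous W0) (cW1 : Continuous W1)
    (h0 : PD 0 u u0) (h1 : PD 1 u u1) (h00 : PD 0 u0 u00) (h01 : PD 1 u0 u01)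
    (h10 : PD 0 u1 u01) (h11 : PD 1 u1 u11) (hW0 : PD 0 W W0) (hW1 : PD 1 W W1)
    (ha : ∀ x ∈ ball (0 : E2) R₀, 1 ≤ (x 0 - a) ^ 2)
    (hb : ∀ x ∈ ball (0 : E2) R₀, (x 0 - a) * W0 x + (x 1 - 0) * W1 x ≤
      s ^ 2 * ((x 0 - a) ^ 2 + (x 1 - 0) ^ 2)) :
    Integrable (fun x : E2 => Real.exp (ε⁻¹ * (s / 2 * ((x 0 - a) ^ 2 + (x 1 - 0) ^ 2) + 1)) ^ 2 *
        (u x ^ 2 + ε ^ 2 * (u0 x ^ 2 + u1 x ^ 2))) ∧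
    Integrable (fun x : E2 => Real.exp (ε⁻¹ * (s / 2 * ((x 0 - a) ^ 2 + (x 1 - 0) ^ 2) + 1)) ^ 2 *
        (-ε ^ 2 * (u00 x + u11 x) + W x * u x) ^ 2) ∧
    ε * ∫ x : E2, Real.exp (ε⁻¹ * (s / 2 * ((x 0 - a) ^ 2 + (x 1 - 0) ^ 2) + 1)) ^ 2 *
        (u x ^ 2 + ε ^ 2 * (u0 x ^ 2 + u1 x ^ 2)) ≤
      2 * ∫ x : E2, Real.exp (ε⁻¹ * (s / 2 * ((x 0 - a) ^ 2 + (x 1 - 0) ^ 2) + 1)) ^ 2 *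
        (-ε ^ 2 * (u00 x + u11 x) + W x * u x) ^ 2 := by
  set X0 : E2 → ℝ := fun x => x 0 - a with hX0
  set X1 : E2 → ℝ := fun x => x 1 - 0 with hX1
  set w : E2 → ℝ := fun x => Real.exp (ε⁻¹ * (s / 2 * (X0 x ^ 2 + X1 x ^ 2) + 1)) with hw
  change Integrable (fun x => w x ^ 2 * (u x ^ 2 + ε ^ 2 * (u0 x ^ 2 + u1 x ^ 2))) ∧
      Integrable (fun x => w x ^ 2 * (-ε ^ 2 * (u00 x + u11 x) + W x * u x) ^ 2) ∧ ε * ∫ x : E2, w x ^ 2 * (u x ^ 2 + ε ^ 2 * (u0 x ^ 2 + u1 x ^ 2)) ≤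
      2 * ∫ x : E2, w x ^ 2 * (-ε ^ 2 * (u00 x + u11 x) + W x * u x) ^ 2
  have cX0 : Continuous X0 := by fun_prop
  have cX1 : Continuous X1 := by fun_prop
  have cw : Continuous w := by fun_prop
  have p00 : PD 0 X0 (fun _ => 1) := PD.congr (PD.coord 0 0 a) (fun _ => rfl) (by simp)
  have p10 : PD 1 X0 (fun _ => 0) := PD.congr (PD.coord 1 0 a) (fun _ => rfl) (by simp)
  have p01 : PD 0 X1 (fun _ => 0) := PD.congr (PD.coord 0 1 0) (fun _ => rfl) (by simp)
  have p11 : PD 1 X1 (fun _ => 1) := PD.congr (PD.coord 1 1 0) (fun _ => rfl) (by simp)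
  clear_value X0 X1
  have pw0 : PD 0 w (fun x => w x * (ε⁻¹ * s * X0 x)) :=
    PD.congr (((((p00.mul p00).add (p01.mul p01)).cmul (s/2)).add (PD.const 0 1)).cmul ε⁻¹).exp
      (fun x => by simp only [hw]; ring_nf) (fun x => by simp only [hw]; ring_nf)
  have pw1 : PD 1 w (fun x => w x * (ε⁻¹ * s * X1 x)) :=
    PD.congr (((((p10.mul p10).add (p11.mul p11)).cmul (s/2)).add (PD.const 1 1)).cmul ε⁻¹).exp
      (fun x => by simp only [hw]; ring_nf) (fun x => by simp only [hw]; ring_nf)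
  clear_value w
  -- conjugated function and derivatives
  obtain ⟨k, hk⟩ : ∃ k, k = ε⁻¹ * s := ⟨_, rfl⟩
  rw [← hk] at pw0 pw1
  obtain ⟨v, hv⟩ : ∃ v : E2 → ℝ, v = fun x => w x * u x := ⟨_, rfl⟩
  obtain ⟨v0, hv0⟩ : ∃ v : E2 → ℝ, v = fun x => w x * (u0 x + k * X0 x * u x) := ⟨_, rfl⟩
  obtain ⟨v1, hv1⟩ : ∃ v : E2 → ℝ, v = fun x => w x * (u1 x + k * X1 x * u x) := ⟨_, rfl⟩
  obtain ⟨v00, hv00⟩ : ∃ v : E2 → ℝ, v = fun x => w x * (u00 x + k * u x + 2 * k * X0 x * u0 x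
    + k ^ 2 * X0 x ^ 2 * u x) := ⟨_, rfl⟩
  obtain ⟨v11, hv11⟩ : ∃ v : E2 → ℝ, v = fun x => w x * (u11 x + k * u x + 2 * k * X1 x * u1 x
    + k ^ 2 * X1 x ^ 2 * u x) := ⟨_, rfl⟩
  obtain ⟨v01, hv01⟩ : ∃ v : E2 → ℝ, v = fun x => w x * (u01 x + k * X0 x * u1 x + k * X1 x * u0 x
    + k ^ 2 * X0 x * X1 x * u x) := ⟨_, rfl⟩
  have d0 : PD 0 v v0 := (pw0.mul h0).congr (fun x => by rw [hv]) (fun x => by rw [hv0]; ring)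
  have d1 : PD 1 v v1 := (pw1.mul h1).congr (fun x => by rw [hv]) (fun x => by rw [hv1]; ring)
  have d00 : PD 0 v0 v00 := (pw0.mul (h00.add ((p00.cmul k).mul h0))).congr
    (fun x => by rw [hv0]) (fun x => by rw [hv00]; ring)
  have d01 : PD 1 v0 v01 := (pw1.mul (h01.add ((p10.cmul k).mul h1))).congr
    (fun x => by rw [hv0]) (fun x => by rw [hv01]; ring)
  have d10 : PD 0 v1 v01 := (pw0.mul (h10.add ((p01.cmul k).mul h0))).congr
    (fun x => by rw [hv1]) (fun x => by rw [hv01]; ring)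
  have d11 : PD 1 v1 v11 := (pw1.mul (h11.add ((p11.cmul k).mul h1))).congr
    (fun x => by rw [hv1]) (fun x => by rw [hv11]; ring)
  -- Q
  have hQ0 : PD 0 (fun x => W x + (-s^2) * (X0 x * X0 x + X1 x * X1 x))
    (fun x => W0 x - 2 * s ^ 2 * X0 x) :=
    (hW0.add (((p00.mul p00).add (p01.mul p01)).cmul (-s^2))).congr (fun x => rfl) (fun x => by ring)
  have hQ1 : PD 1 (fun x => W x + (-s^2) * (X0 x * X0 x + X1 x * X1 x))
    (fun x => W1 x - 2 * s ^ 2 * X1 x) :=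
    (hW1.add (((p10.mul p10).add (p11.mul p11)).cmul (-s^2))).congr (fun x => rfl) (fun x => by ring)
  have cv : Continuous v := by rw [hv]; fun_prop
  have cv0 : Continuous v0 := by rw [hv0]; fun_prop
  have cv1 : Continuous v1 := by rw [hv1]; fun_prop
  have cv00 : Continuous v00 := by rw [hv00]; fun_prop
  have cv01 : Continuous v01 := by rw [hv01]; fun_prop
  have cv11 : Continuous v11 := by rw [hv11]; fun_prop
  have zv : ∀ x ∉ S, v x = 0 := fun x hx => by simp [hv, z x hx]
  have zv0 : ∀ x ∉ S, v0 x = 0 := fun x hx => by simp [hv0, z x hx, z0 x hx]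
  have zv1 : ∀ x ∉ S, v1 x = 0 := fun x hx => by simp [hv1, z x hx, z1 x hx]
  have zv00 : ∀ x ∉ S, v00 x = 0 := fun x hx => by simp [hv00, z x hx, z0 x hx, z00 x hx]
  have zv01 : ∀ x ∉ S, v01 x = 0 := fun x hx => by
    simp [hv01, z x hx, z0 x hx, z1 x hx, z01 x hx]
  have zv11 : ∀ x ∉ S, v11 x = 0 := fun x hx => by simp [hv11, z x hx, z1 x hx, z11 x hx]
  have int : ∀ f : E2 → ℝ, Continuous f → (∀ x ∉ S, f x = 0) → Integrable f := fun f hf hz =>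
    hf.integrable_of_hasCompactSupport (HasCompactSupport.intro hS hz)
  have F0 : PD 0 (fun x => -ε^2 * (v0 x * (X0 x * v0 x + X1 x * v1 x + v x)
      + (-1/2) * (X0 x * (v0 x * v0 x + v1 x * v1 x)))
      + (1/2) * ((W x + -s ^ 2 * (X0 x * X0 x + X1 x * X1 x)) * (X0 x * (v x * v x))))
    (fun x => -ε^2 * (v00 x * (X0 x * v0 x + X1 x * v1 x + v x)
      + v0 x * (2 * v0 x + X0 x * v00 x + X1 x * v01 x) - (1/2) * (v0 x ^ 2 + v1 x ^ 2)
      - X0 x * (v0 x * v00 x + v1 x * v01 x)) + (1/2) * ((W0 x - 2 * s ^ 2 * X0 x) * X0 x * v x ^ 2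
      + (W x - s ^ 2 * (X0 x ^ 2 + X1 x ^ 2)) * (v x ^ 2 + 2 * X0 x * v x * v0 x))) :=
    ((((d00.mul (((p00.mul d00).add (p01.mul d10)).add d0)).add
    ((p00.mul ((d00.mul d00).add (d10.mul d10))).cmul (-1/2))).cmul (-ε^2)).add
    ((hQ0.mul (p00.mul (d0.mul d0))).cmul (1/2))).congr (fun x => rfl) (fun x => by ring)
  have F1 : PD 1 (fun x => -ε^2 * (v1 x * (X0 x * v0 x + X1 x * v1 x + v x)
      + (-1/2) * (X1 x * (v0 x * v0 x + v1 x * v1 x)))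
      + (1/2) * ((W x + -s ^ 2 * (X0 x * X0 x + X1 x * X1 x)) * (X1 x * (v x * v x))))
    (fun x => -ε^2 * (v11 x * (X0 x * v0 x + X1 x * v1 x + v x)
      + v1 x * (2 * v1 x + X0 x * v01 x + X1 x * v11 x) - (1/2) * (v0 x ^ 2 + v1 x ^ 2)
      - X1 x * (v0 x * v01 x + v1 x * v11 x)) + (1/2) * ((W1 x - 2 * s ^ 2 * X1 x) * X1 x * v x ^ 2
      + (W x - s ^ 2 * (X0 x ^ 2 + X1 x ^ 2)) * (v x ^ 2 + 2 * X1 x * v x * v1 x))) :=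
    ((((d11.mul (((p10.mul d01).add (p11.mul d11)).add d1)).add
    ((p11.mul ((d01.mul d01).add (d11.mul d11))).cmul (-1/2))).cmul (-ε^2)).add
    ((hQ1.mul (p11.mul (d1.mul d1))).cmul (1/2))).congr (fun x => rfl) (fun x => by ring)
  obtain ⟨G0, hG0⟩ : ∃ g : E2 → ℝ, g = (fun x => -ε^2 * (v00 x * (X0 x * v0 x + X1 x * v1 x + v x)
      + v0 x * (2 * v0 x + X0 x * v00 x + X1 x * v01 x) - (1/2) * (v0 x ^ 2 + v1 x ^ 2)
      - X0 x * (v0 x * v00 x + v1 x * v01 x)) + (1/2) * ((W0 x - 2 * s ^ 2 * X0 x) * X0 x * v x ^ 2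
      + (W x - s ^ 2 * (X0 x ^ 2 + X1 x ^ 2)) * (v x ^ 2 + 2 * X0 x * v x * v0 x))) := ⟨_, rfl⟩
  obtain ⟨G1, hG1⟩ : ∃ g : E2 → ℝ, g = (fun x => -ε^2 * (v11 x * (X0 x * v0 x + X1 x * v1 x + v x)
      + v1 x * (2 * v1 x + X0 x * v01 x + X1 x * v11 x) - (1/2) * (v0 x ^ 2 + v1 x ^ 2)
      - X1 x * (v0 x * v01 x + v1 x * v11 x)) + (1/2) * ((W1 x - 2 * s ^ 2 * X1 x) * X1 x * v x ^ 2
      + (W x - s ^ 2 * (X0 x ^ 2 + X1 x ^ 2)) * (v x ^ 2 + 2 * X1 x * v x * v1 x))) := ⟨_, rfl⟩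
  rw [← hG0] at F0
  rw [← hG1] at F1
  have iG0 : Integrable G0 := int _ (by rw [hG0]; fun_prop)
    (fun x hx => by simp [hG0, zv x hx, zv0 x hx, zv1 x hx])
  have iG1 : Integrable G1 := int _ (by rw [hG1]; fun_prop)
    (fun x hx => by simp [hG1, zv x hx, zv0 x hx, zv1 x hx])
  have I0 : ∫ x, G0 x = 0 := F0.integral_zero (int _ (by fun_prop)
    (fun x hx => by simp [zv x hx, zv0 x hx, zv1 x hx])) iG0
  have I1 : ∫ x, G1 x = 0 := F1.integral_zero (int _ (by fun_prop)
    (fun x hx => by simp [zv x hx, zv0 x hx, zv1 x hx])) iG1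
  have iL : Integrable (fun x => w x ^ 2 * (u x ^ 2 + ε ^ 2 * (u0 x ^ 2 + u1 x ^ 2))) :=
    int _ (by fun_prop) (fun x hx => by simp [z x hx, z0 x hx, z1 x hx])
  have iR : Integrable (fun x => w x ^ 2 * (-ε ^ 2 * (u00 x + u11 x) + W x * u x) ^ 2) :=
    int _ (by fun_prop) (fun x hx => by simp [z x hx, z00 x hx, z11 x hx])
  refine ⟨iL, iR, ?_⟩
  have hsk : s = ε * k := by rw [hk]; field_simp
  have pt : ∀ x, ε * (w x ^ 2 * (u x ^ 2 + ε ^ 2 * (u0 x ^ 2 + u1 x ^ 2))) ≤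
      2 * (w x ^ 2 * (-ε ^ 2 * (u00 x + u11 x) + W x * u x) ^ 2) +
        (-(8 * ε * s)) * (G0 x + G1 x) := by
    intro x
    obtain ⟨A, hA⟩ : ∃ A, A = -ε ^ 2 * (v00 x + v11 x) +
      (W x - s ^ 2 * (X0 x ^ 2 + X1 x ^ 2)) * v x := ⟨_, rfl⟩
    obtain ⟨B, hB⟩ : ∃ B, B = 2 * ε * s * (X0 x * v0 x + X1 x * v1 x + v x) := ⟨_, rfl⟩
    have hT : w x * (-ε ^ 2 * (u00 x + u11 x) + W x * u x) = A + B := by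
      rw [hA, hB, hv, hv0, hv1, hv00, hv11, hsk]; ring
    have hI : 2 * A * B = 4 * ε * s * (ε ^ 2 * (v0 x ^ 2 + v1 x ^ 2) - 1/2 *
        (X0 x * W0 x + X1 x * W1 x - 2 * s ^ 2 * (X0 x ^ 2 + X1 x ^ 2)) * v x ^ 2)
        + 4 * ε * s * (G0 x + G1 x) := by
      rw [hA, hB, hG0, hG1]; ring
    have hL : w x ^ 2 * (u x ^ 2 + ε ^ 2 * (u0 x ^ 2 + u1 x ^ 2)) = v x ^ 2 +
        (ε * v0 x - s * X0 x * v x) ^ 2 + (ε * v1 x - s * X1 x * v x) ^ 2 := by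
      rw [hv, hv0, hv1, hsk]; ring
    have hR : w x ^ 2 * (-ε ^ 2 * (u00 x + u11 x) + W x * u x) ^ 2 = (A + B) ^ 2 := by
      rw [← hT]; ring
    rw [hL, hR]
    have h3 : v x ^ 2 +
        (ε * v0 x - s * X0 x * v x) ^ 2 + (ε * v1 x - s * X1 x * v x) ^ 2 ≤
        8 * s * (ε ^ 2 * (v0 x ^ 2 + v1 x ^ 2) - 1/2 *
        (X0 x * W0 x + X1 x * W1 x - 2 * s ^ 2 * (X0 x ^ 2 + X1 x ^ 2)) * v x ^ 2) := by
      by_cases hx : x ∈ S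
      · have e1 : 1 ≤ X0 x ^ 2 := by simpa only [hX0] using ha x (hSB hx)
        have e2 : X0 x * W0 x + X1 x * W1 x ≤ s ^ 2 * (X0 x ^ 2 + X1 x ^ 2) := by
          simpa only [hX0, hX1] using hb x (hSB hx)
        obtain ⟨r, hr⟩ : ∃ r, r = X0 x ^ 2 + X1 x ^ 2 := ⟨_, rfl⟩
        have hr1 : 1 ≤ r := by rw [hr]; nlinarith [sq_nonneg (X1 x)]
        have f1 : (X0 x * W0 x + X1 x * W1 x) * (s * v x ^ 2) ≤ s ^ 2 * r * (s * v x ^ 2) := by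
          rw [hr]; exact mul_le_mul_of_nonneg_right e2 (by positivity)
        have f2 : (ε * v0 x - s * X0 x * v x) ^ 2 + (ε * v1 x - s * X1 x * v x) ^ 2 ≤
            2 * ε ^ 2 * (v0 x ^ 2 + v1 x ^ 2) + 2 * s ^ 2 * r * v x ^ 2 := by
          rw [hr]; nlinarith [sq_nonneg (ε * v0 x + s * X0 x * v x),
            sq_nonneg (ε * v1 x + s * X1 x * v x)]
        have f3 : ε ^ 2 * (v0 x ^ 2 + v1 x ^ 2) ≤ s * (ε ^ 2 * (v0 x ^ 2 + v1 x ^ 2)) :=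
          le_mul_of_one_le_left (by positivity) hs
        have f4 : s ^ 2 * r * v x ^ 2 ≤ s * (s ^ 2 * r * v x ^ 2) :=
          le_mul_of_one_le_left (by positivity) hs
        have f5 : v x ^ 2 ≤ (s ^ 2 * r) * v x ^ 2 :=
          le_mul_of_one_le_left (by positivity)
            (one_le_mul_of_one_le_of_one_le (one_le_pow₀ hs) hr1)
        have f6 : 0 ≤ ε ^ 2 * (v0 x ^ 2 + v1 x ^ 2) := by positivity
        have f7 : 0 ≤ s ^ 2 * r * v x ^ 2 := by positivity
        rw [← hr]
        nlinarith
      · simp [zv x hx, zv0 x hx, zv1 x hx]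
    have h4 := mul_le_mul_of_nonneg_left h3 hε.le
    nlinarith [sq_nonneg (A - B), sq_nonneg A, sq_nonneg B]
  have iG : Integrable (fun x => G0 x + G1 x) := iG0.add iG1
  have := integral_mono (iL.const_mul ε) ((iR.const_mul 2).add (iG.const_mul (-(8 * ε * s)))) pt
  simp only [Pi.add_apply] at this
  rw [integral_add (iR.const_mul 2) (iG.const_mul (-(8 * ε * s))),
    integral_const_mul, integral_const_mul, integral_const_mul,
    integral_add iG0 iG1, I0, I1] at this
  linarith

lemma omega_le (R₀ : ℝ) (V : E2 → ℝ) (hVbdd : ∃ M : ℝ, ∀ x, |V x| ≤ M) (θ : ℝ) (x t : E2)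
    (hx : x ∈ ball (0 : E2) R₀) (ht : t ∈ closedBall (0 : E2) θ) :
    |V (x - t) - V x| ≤ omegaV R₀ V θ := by
  obtain ⟨M, hM⟩ := hVbdd
  refine le_csSup ⟨2 * M, ?_⟩ ⟨x, hx, t, ht, rfl⟩
  rintro _ ⟨y, -, r, -, rfl⟩
  have := abs_sub (V (y - r)) (V y)
  linarith [hM (y - r), hM y]

lemma grad_Vreg (R₀ : ℝ) (V : E2 → ℝ) (hVmeas : Measurable V) (hVbdd : ∃ M : ℝ, ∀ x, |V x| ≤ M)
    (φ : E2 → ℝ) (hφsmooth : ContDiff ℝ (⊤ : ℕ∞) φ) (hφcpt : HasCompactSupport φ)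
    (hφsupp : tsupport φ ⊆ closedBall (0 : E2) 1) (θ : ℝ) (hθ : 0 < θ) :
    ContDiff ℝ 1 (Vreg V φ θ) ∧ ∀ x ∈ ball (0 : E2) R₀, ∀ e : E2,
      |fderiv ℝ (Vreg V φ θ) x e| ≤ omegaV R₀ V θ / θ * ∫ t, |fderiv ℝ φ t e| := by
  set f : E2 → ℝ := fun t => φ (θ⁻¹ • t) with hf
  have hfs : ContDiff ℝ 1 f := (hφsmooth.of_le (by norm_cast)).comp (by fun_prop)
  have hfc : HasCompactSupport f := hφcpt.comp_smul (inv_ne_zero hθ.ne')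
  have hVl : LocallyIntegrable V := by
    obtain ⟨M, hM⟩ := hVbdd
    exact (memLp_top_of_bound hVmeas.aestronglyMeasurable M
      (Filter.Eventually.of_forall hM)).locallyIntegrable le_top
  have hconv : Vreg V φ θ = fun x => (1 / θ ^ 2) *
      (convolution f V (ContinuousLinearMap.mul ℝ ℝ) volume) x := by
    funext x
    simp only [Vreg, convolution, ContinuousLinearMap.mul_apply', hf]
    congr 2; funext t; ring
  have hfd : ∀ t e, fderiv ℝ f t e = θ⁻¹ * fderiv ℝ φ (θ⁻¹ • t) e := by
    intro t e
    have h1 : HasFDerivAt φ (fderiv ℝ φ (θ⁻¹ • t)) (θ⁻¹ • t) :=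
      (hφsmooth.differentiable (by simp) _).hasFDerivAt
    have h2 : HasFDerivAt (fun t : E2 => θ⁻¹ • t) (θ⁻¹ • ContinuousLinearMap.id ℝ E2) t :=
      (θ⁻¹ • ContinuousLinearMap.id ℝ E2).hasFDerivAt (x := t)
    have h3 : HasFDerivAt f _ t := h1.comp t h2
    rw [h3.fderiv]
    simp
  have hfdc : ∀ e, Continuous (fun t => fderiv ℝ f t e) := fun e =>
    (hfs.continuous_fderiv (by simp)).clm_apply continuous_const
  have hfds : ∀ e, HasCompactSupport (fun t => fderiv ℝ f t e) := fun e => hfc.fderiv_apply ℝ e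
  refine ⟨?_, ?_⟩
  · rw [hconv]
    exact contDiff_const.mul (hfc.contDiff_convolution_left _ hfs hVl)
  · intro x hx e
    have h1 := hfc.hasFDerivAt_convolution_left (ContinuousLinearMap.mul ℝ ℝ) hfs hVl x
    have hint : Integrable (fun t => fderiv ℝ f t e) :=
      (hfdc e).integrable_of_hasCompactSupport (hfds e)
    have hz : ∫ t, fderiv ℝ f t e = 0 := by
      have := integral_bilinear_hasLineDerivAt_right_eq_neg_left_of_integrable
        (μ := (volume : Measure E2))
        (f := fun _ : E2 => (1:ℝ)) (f' := fun _ => (0:ℝ)) (g := f) (g' := fun t => fderiv ℝ f t e)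
        (v := e) (B := ContinuousLinearMap.mul ℝ ℝ)
        (by simp) (by simpa using hint)
        (by simpa using hfs.continuous.integrable_of_hasCompactSupport hfc)
        (fun x _ => by
          have := hasDerivAt_const (0:ℝ) (1:ℝ)
          exact this) (fun x _ => (hfs.differentiable (by simp) x).hasFDerivAt.hasLineDerivAt e)
      simpa using this
    have hprod : Integrable (fun t => fderiv ℝ f t e * V (x - t)) := by
      obtain ⟨M, hM⟩ := hVbdd
      refine hint.mul_bdd (c := M) ?_ ?_
      · exact (hVmeas.comp (measurable_const.sub measurable_id)).aestronglyMeasurable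
      · exact Filter.Eventually.of_forall fun t => hM _
    have h2 : fderiv ℝ (Vreg V φ θ) x e = (1 / θ ^ 2) * ∫ t, fderiv ℝ f t e * V (x - t) := by
      rw [hconv, (h1.const_mul (1 / θ^2)).fderiv]
      have hex : ConvolutionExistsAt (fderiv ℝ f) V x
          (ContinuousLinearMap.precompL E2 (ContinuousLinearMap.mul ℝ ℝ)) volume :=
        (hfc.fderiv ℝ).convolutionExists_left _ (hfs.continuous_fderiv (by simp)) hVl x
      simp only [_root_.smul_apply, smul_eq_mul, convolution]
      rw [ContinuousLinearMap.integral_apply hex]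
      simp
    have h3 : ∫ t, fderiv ℝ f t e * V (x - t) = ∫ t, fderiv ℝ f t e * (V (x - t) - V x) := by
      simp only [mul_sub]
      rw [integral_sub hprod (hint.mul_const _), integral_mul_const, hz]; simp
    have h4 : |∫ t, fderiv ℝ f t e * (V (x - t) - V x)| ≤
        ∫ t, |fderiv ℝ f t e| * omegaV R₀ V θ := by
      refine (abs_integral_le_integral_abs).trans ?_
      refine integral_mono_of_nonneg (Filter.Eventually.of_forall fun _ => abs_nonneg _)
        (hint.abs.mul_const _) (Filter.Eventually.of_forall fun t => ?_)
      simp only [abs_mul]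
      by_cases ht : t ∈ closedBall (0 : E2) θ
      · exact mul_le_mul_of_nonneg_left (omega_le R₀ V hVbdd θ x t hx ht) (abs_nonneg _)
      · have : fderiv ℝ f t e = 0 := by
          rw [hfd]
          have : θ⁻¹ • t ∉ tsupport φ := fun h => ht (by
            have := hφsupp h
            simp only [mem_closedBall, dist_zero_right, norm_smul, norm_inv, Real.norm_eq_abs,
              abs_of_pos hθ] at this ⊢
            rwa [inv_mul_le_iff₀ hθ, mul_one] at this)
          rw [fderiv_of_notMem_tsupport ℝ this]; simp
        simp [this]
    have h5 : ∫ t, |fderiv ℝ f t e| = θ * ∫ t, |fderiv ℝ φ t e| := by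
      simp only [hfd, abs_mul, abs_of_pos (inv_pos.mpr hθ)]
      rw [integral_const_mul, Measure.integral_comp_inv_smul_of_nonneg volume
        (fun t => |fderiv ℝ φ t e|) hθ.le]
      simp
      field_simp
    rw [integral_mul_const, h5] at h4
    rw [h2, h3, abs_mul, abs_of_pos (by positivity : 0 < 1 / θ ^ 2)]
    calc _ ≤ _ := mul_le_mul_of_nonneg_left h4 (by positivity)
      _ = _ := by field_simp

lemma key_real (R₀ a s ε : ℝ) (hs : 1 ≤ s) (hε : 0 < ε) (u W : E2 → ℝ)
    (hu : ContDiff ℝ (⊤ : ℕ∞) u) (huc : HasCompactSupport u) (hub : tsupport u ⊆ ball (0 : E2) R₀)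
    (hW : ContDiff ℝ 1 W)
    (ha : ∀ x ∈ ball (0 : E2) R₀, 1 ≤ (x 0 - a) ^ 2)
    (hb : ∀ x ∈ ball (0 : E2) R₀, (x 0 - a) * fderiv ℝ W x (basis2 0) +
      (x 1 - 0) * fderiv ℝ W x (basis2 1) ≤ s ^ 2 * ((x 0 - a) ^ 2 + (x 1 - 0) ^ 2)) :
    Integrable (fun x : E2 => Real.exp (ε⁻¹ * (s / 2 * ((x 0 - a) ^ 2 + (x 1 - 0) ^ 2) + 1)) ^ 2 *
        (u x ^ 2 + ε ^ 2 * (fderiv ℝ u x (basis2 0) ^ 2 + fderiv ℝ u x (basis2 1) ^ 2))) ∧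
    Integrable (fun x : E2 => Real.exp (ε⁻¹ * (s / 2 * ((x 0 - a) ^ 2 + (x 1 - 0) ^ 2) + 1)) ^ 2 *
        (-ε ^ 2 * (fderiv ℝ (fun y => fderiv ℝ u y (basis2 0)) x (basis2 0) +
          fderiv ℝ (fun y => fderiv ℝ u y (basis2 1)) x (basis2 1)) + W x * u x) ^ 2) ∧
    ε * ∫ x : E2, Real.exp (ε⁻¹ * (s / 2 * ((x 0 - a) ^ 2 + (x 1 - 0) ^ 2) + 1)) ^ 2 *
        (u x ^ 2 + ε ^ 2 * (fderiv ℝ u x (basis2 0) ^ 2 + fderiv ℝ u x (basis2 1) ^ 2)) ≤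
    2 * ∫ x : E2, Real.exp (ε⁻¹ * (s / 2 * ((x 0 - a) ^ 2 + (x 1 - 0) ^ 2) + 1)) ^ 2 *
        (-ε ^ 2 * (fderiv ℝ (fun y => fderiv ℝ u y (basis2 0)) x (basis2 0) +
          fderiv ℝ (fun y => fderiv ℝ u y (basis2 1)) x (basis2 1)) + W x * u x) ^ 2 := by
  have hd : ∀ e, ContDiff ℝ (⊤ : ℕ∞) (fun y => fderiv ℝ u y e) := fun e =>
    (hu.fderiv_right (m := (⊤ : ℕ∞)) (by norm_cast)).clm_apply contDiff_const
  have hdc : ∀ e f, Continuous (fun x => fderiv ℝ (fun y => fderiv ℝ u y e) x f) := fun e f =>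
    ((hd e).continuous_fderiv (by simp)).clm_apply continuous_const
  have hdW : ∀ e, Continuous (fun x => fderiv ℝ W x e) := fun e =>
    (hW.continuous_fderiv (by simp)).clm_apply continuous_const
  have zd : ∀ e, ∀ x ∉ tsupport u, fderiv ℝ u x e = 0 := fun e x hx => by
    rw [fderiv_of_notMem_tsupport ℝ hx]; simp
  have zdd : ∀ e f, ∀ x ∉ tsupport u, fderiv ℝ (fun y => fderiv ℝ u y e) x f = 0 :=
    fun e f x hx => by
    rw [fderiv_of_notMem_tsupport ℝ (fun h => hx (tsupport_fderiv_apply_subset ℝ e h))]; simp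
  have dif : Differentiable ℝ u := hu.differentiable (by simp)
  have dif2 : ∀ e, Differentiable ℝ (fun y => fderiv ℝ u y e) := fun e =>
    (hd e).differentiable (by simp)
  have symm : ∀ e f x, fderiv ℝ (fun y => fderiv ℝ u y e) x f =
      fderiv ℝ (fun y => fderiv ℝ u y f) x e := by
    intro e f x
    have h1 : DifferentiableAt ℝ (fderiv ℝ u) x :=
      (hu.fderiv_right (m := (⊤ : ℕ∞)) (by norm_cast)).differentiable (by simp) x
    have h2 : ∀ e f, fderiv ℝ (fun y => fderiv ℝ u y e) x f = fderiv ℝ (fderiv ℝ u) x f e := by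
      intro e f
      rw [fderiv_clm_apply h1 (differentiableAt_const e)]
      simp
    rw [h2, h2]
    exact ((contDiff_infty.1 hu 2).contDiffAt.isSymmSndFDerivAt (by simp)) f e
  refine key R₀ a s ε hs hε u (fun x => fderiv ℝ u x (basis2 0)) (fun x => fderiv ℝ u x (basis2 1))
    (fun x => fderiv ℝ (fun y => fderiv ℝ u y (basis2 0)) x (basis2 0))
    (fun x => fderiv ℝ (fun y => fderiv ℝ u y (basis2 0)) x (basis2 1))
    (fun x => fderiv ℝ (fun y => fderiv ℝ u y (basis2 1)) x (basis2 1)) W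
    (fun x => fderiv ℝ W x (basis2 0)) (fun x => fderiv ℝ W x (basis2 1)) (tsupport u) huc hub
    (fun x hx => image_eq_zero_of_notMem_tsupport hx) (zd _) (zd _) (zdd _ _) (zdd _ _) (zdd _ _)
    hu.continuous (hd _).continuous (hd _).continuous (hdc _ _) (hdc _ _) (hdc _ _)
    hW.continuous (hdW _) (hdW _)
    (PD.of_diff dif _) (PD.of_diff dif _) (PD.of_diff (dif2 _) _) (PD.of_diff (dif2 _) _)
    ((PD.of_diff (dif2 _) _).congr (fun _ => rfl) (fun x => symm _ _ _)) (PD.of_diff (dif2 _) _)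
    (PD.of_diff (hW.differentiable (by simp)) _) (PD.of_diff (hW.differentiable (by simp)) _) ha hb

lemma key_cplx (R₀ a s ε : ℝ) (hs : 1 ≤ s) (hε : 0 < ε) (u : E2 → ℂ) (W : E2 → ℝ)
    (hu : ContDiff ℝ (⊤ : ℕ∞) u) (huc : HasCompactSupport u) (hub : tsupport u ⊆ ball (0 : E2) R₀)
    (hW : ContDiff ℝ 1 W)
    (ha : ∀ x ∈ ball (0 : E2) R₀, 1 ≤ (x 0 - a) ^ 2)
    (hb : ∀ x ∈ ball (0 : E2) R₀, (x 0 - a) * fderiv ℝ W x (basis2 0) +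
      (x 1 - 0) * fderiv ℝ W x (basis2 1) ≤ s ^ 2 * ((x 0 - a) ^ 2 + (x 1 - 0) ^ 2)) :
    ε * ∫ x : E2, Real.exp (ε⁻¹ * (s / 2 * ((x 0 - a) ^ 2 + (x 1 - 0) ^ 2) + 1)) ^ 2 * (‖u x‖ ^ 2 + ε ^ 2 * gradSq u x) ≤
    2 * ∫ x : E2, Real.exp (ε⁻¹ * (s / 2 * ((x 0 - a) ^ 2 + (x 1 - 0) ^ 2) + 1)) ^ 2 * ‖-(ε ^ 2 : ℂ) * lapC u x + (W x : ℂ) * u x‖ ^ 2 := by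
  have hgen : ∀ P : ℂ →L[ℝ] ℝ, ∀ v : E2 → ℂ, Differentiable ℝ v → ∀ x e,
      fderiv ℝ (fun y => P (v y)) x e = P (fderiv ℝ v x e) := by
    intro P v hv x e
    have := (P.hasFDerivAt.comp x (hv x).hasFDerivAt)
    have h2 : HasFDerivAt (fun y => P (v y)) (P.comp (fderiv ℝ v x)) x := this
    rw [h2.fderiv]; rfl
  have dif : Differentiable ℝ u := hu.differentiable (by simp)
  have dif2 : ∀ e, Differentiable ℝ (fun y => fderiv ℝ u y e) := fun e =>
    ((hu.fderiv_right (m := (⊤ : ℕ∞)) (by norm_cast)).clm_apply contDiff_const).differentiable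
      (by simp)
  have hk : ∀ P : ℂ →L[ℝ] ℝ, _ := fun P =>
    key_real R₀ a s ε hs hε (fun x => P (u x)) W (P.contDiff.comp hu)
      (huc.comp_left (g := P) (map_zero P))
      ((tsupport_comp_subset (g := P) (map_zero P) u).trans hub) hW ha hb
  have hre := hk Complex.reCLM
  have him := hk Complex.imCLM
  simp only [hgen _ u dif, hgen _ _ (dif2 _)] at hre him
  simp only [Complex.reCLM_apply, Complex.imCLM_apply] at hre him
  obtain ⟨a1, a2, a3⟩ := hre
  obtain ⟨b1, b2, b3⟩ := him
  have e1 := integral_add a1 b1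
  have e2 := integral_add a2 b2
  have nsq : ∀ z : ℂ, ‖z‖ ^ 2 = z.re ^ 2 + z.im ^ 2 := fun z => by
    rw [Complex.sq_norm, Complex.normSq_apply]; ring
  have f1 : ∫ x : E2, Real.exp (ε⁻¹ * (s / 2 * ((x 0 - a) ^ 2 + (x 1 - 0) ^ 2) + 1)) ^ 2 * (‖u x‖ ^ 2 + ε ^ 2 * gradSq u x) = _ := (integral_congr_ae
    (Filter.Eventually.of_forall fun x => by
      simp only [gradSq, Fin.sum_univ_two, nsq]; ring)).trans e1
  have f2 : ∫ x : E2, Real.exp (ε⁻¹ * (s / 2 * ((x 0 - a) ^ 2 + (x 1 - 0) ^ 2) + 1)) ^ 2 * ‖-(ε ^ 2 : ℂ) * lapC u x + (W x : ℂ) * u x‖ ^ 2 = _ := (integral_congr_ae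
    (Filter.Eventually.of_forall fun x => by
      have : (ε ^ 2 : ℂ) = ((ε ^ 2 : ℝ) : ℂ) := by push_cast; rfl
      simp only [lapC, Fin.sum_univ_two, nsq, this, ← Complex.ofReal_neg, Complex.add_re,
        Complex.add_im, Complex.re_ofReal_mul, Complex.im_ofReal_mul]
      ring)).trans e2
  rw [f1, f2]
  linarith
theorem stmt9 (R₀ : ℝ) (hR₀ : 0 < R₀) (E₀ : ℝ) (hE₀ : 0 < E₀)
    (V : E2 → ℝ) (hVmeas : Measurable V) (hVbdd : ∃ M : ℝ, ∀ x, |V x| ≤ M)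
    (hω : ∀ θ ∈ Set.Ioc (0 : ℝ) 1, 0 < omegaV R₀ V θ)
    (φ : E2 → ℝ) (hφsmooth : ContDiff ℝ (⊤ : ℕ∞) φ) (hφcpt : HasCompactSupport φ)
    (hφsupp : tsupport φ ⊆ closedBall (0 : E2) 1) (hφnonneg : ∀ x, 0 ≤ φ x)
    (hφmass : ∫ x : E2, φ x = 1) :
    ∃ ψ : E2 → ℝ, ContDiff ℝ (⊤ : ℕ∞) ψ ∧ (∀ x, 0 < ψ x) ∧
      ∃ h₀ > (0 : ℝ), ∃ θ₀ ∈ Set.Ioc (0 : ℝ) 1, ∃ C > (0 : ℝ),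
        ∀ h : ℝ, 0 < h → h ≤ h₀ → ∀ θ : ℝ, 0 < θ → θ ≤ θ₀ →
          ∀ Eev ∈ Set.Icc (-E₀) E₀,
            ∀ u : E2 → ℂ, ContDiff ℝ (⊤ : ℕ∞) u → HasCompactSupport u →
              tsupport u ⊆ ball (0 : E2) R₀ →
              h * ∫ x in ball (0 : E2) R₀,
                  Real.exp (2 * ψ x * Real.sqrt (omegaV R₀ V θ) / (h * Real.sqrt θ)) *
                    (‖u x‖ ^ 2 + (θ / omegaV R₀ V θ) * (h ^ 2 * gradSq u x)) ≤
                C * (θ / omegaV R₀ V θ) ^ ((3 : ℝ) / 2) *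
                  ∫ x in ball (0 : E2) R₀,
                    Real.exp (2 * ψ x * Real.sqrt (omegaV R₀ V θ) / (h * Real.sqrt θ)) *
                      ‖schrod h (Vreg V φ θ) Eev u x‖ ^ 2 := by
  obtain ⟨K0, hK0⟩ : ∃ K, K = ∫ t, |fderiv ℝ φ t (basis2 0)| := ⟨_, rfl⟩
  obtain ⟨K1, hK1⟩ : ∃ K, K = ∫ t, |fderiv ℝ φ t (basis2 1)| := ⟨_, rfl⟩
  have K0n : 0 ≤ K0 := hK0 ▸ integral_nonneg fun _ => abs_nonneg _
  have K1n : 0 ≤ K1 := hK1 ▸ integral_nonneg fun _ => abs_nonneg _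
  obtain ⟨s, hs⟩ : ∃ s, s = K0 + K1 + 1 := ⟨_, rfl⟩
  have hs1 : 1 ≤ s := by linarith
  refine ⟨fun x => s / 2 * ((x 0 - (R₀ + 1)) ^ 2 + (x 1 - 0) ^ 2) + 1, by fun_prop,
    fun x => by positivity, 1, one_pos, 1, by simp, 2, two_pos, ?_⟩
  intro h hh _ θ hθ hθ1 E hE u hu huc hub
  have hω := hω θ ⟨hθ, hθ1⟩
  obtain ⟨hVs, hVg⟩ := grad_Vreg R₀ V hVmeas hVbdd φ hφsmooth hφcpt hφsupp θ hθ
  obtain ⟨ω, hωe⟩ : ∃ ω, ω = omegaV R₀ V θ := ⟨_, rfl⟩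
  rw [← hωe] at hω hVg ⊢
  obtain ⟨q, hq⟩ : ∃ q, q = θ / ω := ⟨_, rfl⟩
  have hq0 : 0 < q := hq ▸ div_pos hθ hω
  have hsq : 0 < √q := Real.sqrt_pos.2 hq0
  have hsq2 : √q * √q = q := Real.mul_self_sqrt hq0.le
  have hsω : 0 < √ω := Real.sqrt_pos.2 hω
  have hsθ : 0 < √θ := Real.sqrt_pos.2 hθ
  have hsqe : √q = √θ / √ω := by rw [hq, Real.sqrt_div hθ.le]
  have ha : ∀ x ∈ ball (0 : E2) R₀, 1 ≤ (x 0 - (R₀ + 1)) ^ 2 := by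
    intro x hx
    have h1 : ‖x 0‖ ≤ ‖x‖ := PiLp.norm_apply_le x 0
    have h2 : ‖x‖ < R₀ := by simpa using hx
    have h3 : x 0 ≤ ‖x 0‖ := le_abs_self _
    nlinarith
  have key := key_cplx R₀ (R₀ + 1) s (h * √q) hs1 (by positivity) u
    (fun x => q * (Vreg V φ θ x - E)) hu huc hub (contDiff_const.mul (hVs.sub contDiff_const)) ha (by
      intro x hx
      have hWd : ∀ e, fderiv ℝ (fun x => q * (Vreg V φ θ x - E)) x e =
          q * fderiv ℝ (Vreg V φ θ) x e := by
        intro e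
        have h1 : HasFDerivAt (fun x => q * (Vreg V φ θ x - E)) _ x :=
          ((hVs.differentiable (by simp) x).hasFDerivAt.sub_const E).const_mul q
        rw [h1.fderiv]; rfl
      have hbd : ∀ e, |q * fderiv ℝ (Vreg V φ θ) x e| ≤ ∫ t, |fderiv ℝ φ t e| := by
        intro e
        rw [abs_mul, abs_of_pos hq0]
        calc _ ≤ _ := mul_le_mul_of_nonneg_left (hVg x hx e) hq0.le
          _ = _ := by rw [hq]; field_simp
      rw [hWd, hWd]
      have b0 := hbd (basis2 0)
      have b1 := hbd (basis2 1)
      rw [← hK0] at b0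
      rw [← hK1] at b1
      have hx0 := ha x hx
      generalize q * fderiv ℝ (Vreg V φ θ) x (basis2 0) = w0 at *
      generalize q * fderiv ℝ (Vreg V φ θ) x (basis2 1) = w1 at *
      generalize x 0 - (R₀ + 1) = X0 at *
      generalize x 1 - 0 = X1 at *
      have c0 : X0 * w0 ≤ |X0| * K0 := (le_abs_self _).trans (by
        rw [abs_mul]; exact mul_le_mul_of_nonneg_left b0 (abs_nonneg _))
      have c1 : X1 * w1 ≤ |X1| * K1 := (le_abs_self _).trans (by
        rw [abs_mul]; exact mul_le_mul_of_nonneg_left b1 (abs_nonneg _))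
      have g0 : |X0| ≤ X0 ^ 2 + X1 ^ 2 := by
        nlinarith [sq_abs X0, sq_nonneg (|X0| - 1), sq_nonneg X1]
      have g1 : |X1| ≤ X0 ^ 2 + X1 ^ 2 := by
        nlinarith [sq_abs X1, sq_nonneg (|X1| - 1), sq_nonneg X1]
      have g2 : K0 + K1 ≤ s ^ 2 := by nlinarith
      have g3 := mul_le_mul_of_nonneg_right g0 K0n
      have g4 := mul_le_mul_of_nonneg_right g1 K1n
      have g5 := mul_le_mul_of_nonneg_right g2 (by positivity : 0 ≤ X0 ^ 2 + X1 ^ 2)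
      linarith)
  have hexp : ∀ y : ℝ, Real.exp (2 * y * √ω / (h * √θ)) = Real.exp ((h * √q)⁻¹ * y) ^ 2 := by
    intro y
    rw [← Real.exp_nat_mul, hsqe]
    congr 1
    push_cast
    field_simp
  have hu0 : ∀ x ∉ ball (0 : E2) R₀, u x = 0 := fun x hx =>
    image_eq_zero_of_notMem_tsupport fun h' => hx (hub h')
  have hd0 : ∀ x ∉ ball (0 : E2) R₀, ∀ e, fderiv ℝ u x e = 0 := fun x hx e => by
    rw [fderiv_of_notMem_tsupport ℝ (fun h' => hx (hub h'))]; simp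
  have hdd0 : ∀ x ∉ ball (0 : E2) R₀, ∀ e f, fderiv ℝ (fun y => fderiv ℝ u y e) x f = 0 :=
    fun x hx e f => by
    rw [fderiv_of_notMem_tsupport ℝ
      (fun h' => hx (hub (tsupport_fderiv_apply_subset ℝ e h')))]; simp
  rw [setIntegral_eq_integral_of_forall_compl_eq_zero
      (fun x hx => by simp [hu0 x hx, gradSq, hd0 x hx]),
    setIntegral_eq_integral_of_forall_compl_eq_zero
      (fun x hx => by simp [hu0 x hx, schrod, lapC, hdd0 x hx])]
  simp only [hexp]
  rw [← hq]
  have e1 : ∀ x, q * (h ^ 2 * gradSq u x) = (h * √q) ^ 2 * gradSq u x := fun x => by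
    rw [mul_pow, Real.sq_sqrt hq0.le]; ring
  have e2 : ∀ x, -(((h * √q : ℝ) : ℂ) ^ 2) * lapC u x + ((q * (Vreg V φ θ x - E) : ℝ) : ℂ) * u x =
      (q : ℂ) * schrod h (Vreg V φ θ) E u x := fun x => by
    rw [← Complex.ofReal_pow, mul_pow, Real.sq_sqrt hq0.le]
    simp only [schrod]; push_cast; ring
  simp only [e1]
  have e3 : ∀ z : ℂ, ‖(q : ℂ) * z‖ ^ 2 = q ^ 2 * ‖z‖ ^ 2 := fun z => by
    rw [norm_mul, mul_pow, Complex.norm_real, Real.norm_eq_abs, sq_abs]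
  simp only [e2, e3] at key
  simp only [mul_left_comm _ (q ^ 2) _] at key
  rw [integral_const_mul] at key
  have hpow : q ^ ((3 : ℝ) / 2) = q * √q := by
    rw [Real.sqrt_eq_rpow, show (3 : ℝ) / 2 = 1 + 1 / 2 by norm_num, Real.rpow_add hq0,
      Real.rpow_one]
  rw [hpow]
  refine le_of_mul_le_mul_left ?_ hsq
  calc _ = _ := by rw [← mul_assoc, mul_comm (√q) h]
    _ ≤ _ := key
    _ = _ := by
      rw [← mul_assoc, ← mul_assoc]
      congr 1
      linear_combination (-2 * q) * hsq2
end
end
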